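/- arXiv:0901.1765 — 2 statements merged into one kernel-verified Lean document; each statement's English description precedes it below -/
import Mathlib

section
/- The Carnot–Carathéodory distance to the identity satisfies the eikonal equation: for every x = (x₁,x₂,x₃) ∈ ℍ with (x₁,x₂) ≠ (0,0), the function d is differentiable at x and |∇d(x)| = ((X₁d(x))² + (X₂d(x))²)^{1/2} = 1. -/
open MeasureTheory Real Filter

noncomputable section

/-- The underlying space of the Heisenberg group: `ℝ³`. -/
abbrev Heis : Type := ℝ × ℝ × ℝ

/-- The Heisenberg group multiplication. -/
def Hmul (x y : Heis) : Heis :=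
  (x.1 + y.1, x.2.1 + y.2.1,
    x.2.2 + y.2.2 + (x.1 * y.2.1 - x.2.1 * y.1) / 2)

/-- The identity element of the Heisenberg group. -/
def He : Heis := ((0 : ℝ), (0 : ℝ), (0 : ℝ))

/-- The left-invariant vector field `X₁ = ∂₁ - (x₂/2) ∂₃` acting on functions. -/
def X1 (f : Heis → ℝ) (x : Heis) : ℝ :=
  fderiv ℝ f x (1, 0, 0) - x.2.1 / 2 * fderiv ℝ f x (0, 0, 1)

/-- The left-invariant vector field `X₂ = ∂₂ + (x₁/2) ∂₃` acting on functions. -/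
def X2 (f : Heis → ℝ) (x : Heis) : ℝ :=
  fderiv ℝ f x (0, 1, 0) + x.1 / 2 * fderiv ℝ f x (0, 0, 1)

/-- The vector field `X₃ = ∂₃` acting on functions. -/
def X3 (f : Heis → ℝ) (x : Heis) : ℝ := fderiv ℝ f x (0, 0, 1)

/-- The length `|∇f|` of the sub-gradient `∇f = (X₁ f, X₂ f)`. -/
def gradLen (f : Heis → ℝ) (x : Heis) : ℝ :=
  Real.sqrt ((X1 f x) ^ 2 + (X2 f x) ^ 2)

/-- The sub-Laplacian `Δ = X₁² + X₂²`. -/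
def subLap (f : Heis → ℝ) (x : Heis) : ℝ := X1 (X1 f) x + X2 (X2 f) x

/-- An admissible (horizontal Lipschitz) path from `x` to `y` in the Heisenberg group:
`γ'(s) = a₁(s) X₁(γ(s)) + a₂(s) X₂(γ(s))` almost everywhere on `[0,1]`. -/
structure AdmissiblePath (x y : Heis) where
  γ : ℝ → Heis
  a1 : ℝ → ℝ
  a2 : ℝ → ℝ
  lipschitz : ∃ K : NNReal, LipschitzOnWith K γ (Set.Icc 0 1)
  meas1 : Measurable a1
  meas2 : Measurable a2
  start : γ 0 = x
  endpoint : γ 1 = y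
  admissible : ∀ᵐ s ∂(volume.restrict (Set.Icc (0:ℝ) 1)),
    HasDerivAt γ (a1 s • (((1 : ℝ), (0 : ℝ), -(γ s).2.1 / 2) : Heis)
      + a2 s • (((0 : ℝ), (1 : ℝ), (γ s).1 / 2) : Heis)) s

/-- The length of an admissible path. -/
def pathLength {x y : Heis} (p : AdmissiblePath x y) : ℝ :=
  ∫ s in Set.Icc (0:ℝ) 1, Real.sqrt (p.a1 s ^ 2 + p.a2 s ^ 2)

/-- The Carnot–Carathéodory distance on the Heisenberg group. -/
def ccDist (x y : Heis) : ℝ :=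
  sInf {l : ℝ | ∃ p : AdmissiblePath x y, l = pathLength p}

/-- The Carnot–Carathéodory distance to the identity `e`. -/
def ccNorm (x : Heis) : ℝ := ccDist x He

/-- The dilations `δ_λ(x) = (λx₁, λx₂, λ²x₃)`. -/
def dil (lam : ℝ) (x : Heis) : Heis := (lam * x.1, lam * x.2.1, lam ^ 2 * x.2.2)

end




noncomputable section

open Set Topology

/-- The normalized area function. -/
def muH (t : ℝ) : ℝ := (t - sin t * cos t) / (4 * sin t ^ 2)

lemma muH_zero : muH 0 = 0 := by simp [muH]

lemma muH_neg (t : ℝ) : muH (-t) = - muH t := by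
  simp only [muH, sin_neg, cos_neg]; rw [← neg_div]; congr 1 <;> ring

lemma sin_sub_pos {t : ℝ} (h0 : 0 < t) (h1 : t < π) : 0 < sin t - t * cos t := by
  have hmono : StrictMonoOn (fun t : ℝ => sin t - t * cos t) (Icc 0 π) := by
    apply strictMonoOn_of_deriv_pos (convex_Icc _ _) (by fun_prop)
    intro x hx
    rw [interior_Icc] at hx
    have : HasDerivAt (fun t : ℝ => sin t - t * cos t) (cos x - (1 * cos x + x * (- sin x))) x :=
      (hasDerivAt_sin x).sub ((hasDerivAt_id x).mul (hasDerivAt_cos x))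
    rw [this.deriv]
    have := mul_pos hx.1 (sin_pos_of_mem_Ioo hx)
    linarith
  have := hmono (left_mem_Icc.2 pi_pos.le) ⟨h0.le, h1.le⟩ h0
  simpa using this

lemma muH_hasDerivAt {t : ℝ} (hs : sin t ≠ 0) :
    HasDerivAt muH ((sin t - t * cos t) / (2 * sin t ^ 3)) t := by
  have h1 : HasDerivAt (fun t : ℝ => t - sin t * cos t)
      (1 - (cos t * cos t + sin t * (- sin t))) t :=
    (hasDerivAt_id t).sub ((hasDerivAt_sin t).mul (hasDerivAt_cos t))
  have h2 : HasDerivAt (fun t : ℝ => 4 * sin t ^ 2) (4 * (2 * sin t ^ 1 * cos t)) t := by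
    simpa using ((hasDerivAt_sin t).pow 2).const_mul 4
  have h3 := h1.div h2 (by positivity)
  refine h3.congr_deriv ?_
  have := sin_sq_add_cos_sq t
  have hc : cos t ^ 2 = 1 - sin t ^ 2 := by linarith
  field_simp
  ring_nf
  simp only [hc]
  ring

lemma muH_pos {t : ℝ} (h0 : 0 < t) (h1 : t < π) : 0 < muH t := by
  have hs := sin_pos_of_pos_of_lt_pi h0 h1
  have h2 : sin (2 * t) < 2 * t := sin_lt (by linarith)
  rw [sin_two_mul] at h2
  apply div_pos (by linarith) (by positivity)

lemma muH_strictMonoOn_pos : StrictMonoOn muH (Ioo 0 π) := by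
  apply strictMonoOn_of_deriv_pos (convex_Ioo _ _)
  · intro x hx
    exact (muH_hasDerivAt (sin_pos_of_mem_Ioo hx).ne').continuousAt.continuousWithinAt
  · intro x hx
    rw [interior_Ioo] at hx
    have hs := sin_pos_of_mem_Ioo hx
    rw [(muH_hasDerivAt hs.ne').deriv]
    exact div_pos (sin_sub_pos hx.1 hx.2) (by positivity)

lemma muH_strictMonoOn : StrictMonoOn muH (Ioo (-π) π) := by
  intro a ha b hb hab
  rcases lt_trichotomy a 0 with h | h | h
  · have hA : 0 < muH (-a) := muH_pos (by linarith) (by linarith [ha.1])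
    rw [muH_neg] at hA
    rcases lt_trichotomy b 0 with h' | h' | h'
    · have := muH_strictMonoOn_pos (a := -b) (b := -a) ⟨by linarith, by linarith [hb.1]⟩
        ⟨by linarith, by linarith [ha.1]⟩ (by linarith)
      rw [muH_neg, muH_neg] at this
      linarith
    · rw [h', muH_zero]; linarith
    · have := muH_pos h' hb.2; linarith
  · subst h; rw [muH_zero]; exact muH_pos hab hb.2
  · exact muH_strictMonoOn_pos ⟨h, ha.2⟩ ⟨h.trans hab, hb.2⟩ hab

lemma muH_surj_pos {w : ℝ} (hw : 0 < w) : ∃ t ∈ Ioo 0 π, muH t = w := by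
  have hpi := pi_gt_three
  have hpi4 := pi_lt_four
  obtain ⟨a, ha0, ha1, haw⟩ : ∃ a : ℝ, 0 < a ∧ a ≤ 1 ∧ a ≤ w :=
    ⟨min 1 w, lt_min one_pos hw, min_le_left _ _, min_le_right _ _⟩
  set e : ℝ := 1 / (2 * (1 + w)) with he
  have he0 : 0 < e := by positivity
  have he1 : e ≤ 1 / 2 := by
    rw [he]; apply one_div_le_one_div_of_le <;> linarith
  have hew : 4 * e ^ 2 * w ≤ 1 := by
    have : e * (2 * (1 + w)) = 1 := by rw [he]; field_simp
    nlinarith [mul_pos he0 he0, mul_pos (mul_pos he0 he0) hw]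
  have hsub : Icc a (π - e) ⊆ Ioo 0 π := fun x hx => ⟨by linarith [hx.1], by linarith [hx.2]⟩
  have hcont : ContinuousOn muH (Icc a (π - e)) := by
    intro x hx
    exact (muH_hasDerivAt (sin_pos_of_mem_Ioo (hsub hx)).ne').continuousAt.continuousWithinAt
  have hle : a ≤ π - e := by linarith
  have hlow : muH a ≤ w := by
    refine le_trans ?_ haw
    have hs : 0 < sin a := sin_pos_of_pos_of_lt_pi ha0 (by linarith)
    have h1 : 2 * a - (2 * a) ^ 3 / 6 < sin (2 * a) := sin_gt_sub_cube (by linarith)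
    rw [sin_two_mul] at h1
    have h2 : a - a ^ 3 / 6 < sin a := sin_gt_sub_cube ha0
    have h3 : a / 2 < sin a := by nlinarith [mul_pos ha0 ha0]
    have h4 : a ^ 2 / 4 < sin a ^ 2 := by nlinarith
    rw [muH, div_le_iff₀ (by positivity)]
    nlinarith
  have hhigh : w ≤ muH (π - e) := by
    rw [muH, sin_pi_sub, cos_pi_sub]
    have hs : 0 < sin e := sin_pos_of_pos_of_lt_pi he0 (by linarith)
    have hs1 : sin e < e := sin_lt he0
    have hc : 0 < cos e := cos_pos_of_mem_Ioo ⟨by linarith, by linarith⟩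
    rw [le_div_iff₀ (by positivity)]
    have : sin e ^ 2 ≤ e ^ 2 := by nlinarith
    nlinarith [mul_pos hs hc]
  obtain ⟨t, ht, h⟩ := intermediate_value_Icc hle hcont ⟨hlow, hhigh⟩
  exact ⟨t, hsub ht, h⟩

lemma muH_surj (w : ℝ) : ∃ t ∈ Ioo (-π) π, muH t = w := by
  rcases lt_trichotomy w 0 with h | h | h
  · obtain ⟨t, ht, h'⟩ := muH_surj_pos (w := -w) (by linarith)
    exact ⟨-t, ⟨by linarith [ht.2], by linarith [ht.1, pi_pos]⟩, by rw [muH_neg, h']; ring⟩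
  · exact ⟨0, ⟨by linarith [pi_pos], pi_pos⟩, by rw [muH_zero, h]⟩
  · obtain ⟨t, ht, h'⟩ := muH_surj_pos h
    exact ⟨t, ⟨by linarith [ht.1, pi_pos], ht.2⟩, h'⟩

/-- The inverse of `muH`. -/
def phiH (w : ℝ) : ℝ := (muH_surj w).choose

lemma phiH_mem (w : ℝ) : phiH w ∈ Ioo (-π) π := (muH_surj w).choose_spec.1
lemma muH_phiH (w : ℝ) : muH (phiH w) = w := (muH_surj w).choose_spec.2

lemma phiH_muH {t : ℝ} (ht : t ∈ Ioo (-π) π) : phiH (muH t) = t :=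
  muH_strictMonoOn.injOn (phiH_mem _) ht (muH_phiH _)

lemma phiH_zero : phiH 0 = 0 := by
  have := phiH_muH (t := 0) ⟨by linarith [pi_pos], pi_pos⟩
  rwa [muH_zero] at this

lemma phiH_eq_zero {w : ℝ} (h : phiH w = 0) : w = 0 := by
  rw [← muH_phiH w, h, muH_zero]

lemma phiH_strictMono : StrictMono phiH := by
  intro a b hab
  rw [← muH_strictMonoOn.lt_iff_lt (phiH_mem a) (phiH_mem b), muH_phiH, muH_phiH]
  exact hab

lemma phiH_continuous : Continuous phiH := by
  rw [continuous_iff_continuousAt]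
  intro w
  apply (phiH_strictMono.strictMonoOn univ).continuousAt_of_image_mem_nhds univ_mem
  refine mem_of_superset (Ioo_mem_nhds (phiH_mem w).1 (phiH_mem w).2) ?_
  intro t ht
  exact ⟨muH t, mem_univ _, phiH_muH ht⟩

lemma sinc_pos' {t : ℝ} (ht : t ∈ Ioo (-π) π) : 0 < sinc t := by
  rcases lt_trichotomy t 0 with h | h | h
  · rw [← sinc_neg, sinc_of_ne_zero (by linarith)]
    exact div_pos (sin_pos_of_pos_of_lt_pi (by linarith) (by linarith [ht.1])) (by linarith)
  · simp [h]
  · rw [sinc_of_ne_zero h.ne']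
    exact div_pos (sin_pos_of_pos_of_lt_pi h ht.2) h

lemma sin_ne_zero' {t : ℝ} (ht : t ∈ Ioo (-π) π) (h : t ≠ 0) : sin t ≠ 0 := by
  have := sinc_pos' ht
  rw [sinc_of_ne_zero h] at this
  intro h0
  simp [h0] at this

/-- The profile of the distance function. -/
def PH (w : ℝ) : ℝ := (sinc (phiH w))⁻¹

lemma PH_zero : PH 0 = 1 := by simp [PH, phiH_zero]

lemma PH_continuous : Continuous PH :=
  (continuous_sinc.comp phiH_continuous).inv₀ fun w => (sinc_pos' (phiH_mem w)).ne'

lemma sin_sub_ne {t : ℝ} (ht : t ∈ Ioo (-π) π) (h : t ≠ 0) : sin t - t * cos t ≠ 0 := by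
  rcases lt_or_gt_of_ne h with h | h
  · have := sin_sub_pos (t := -t) (by linarith) (by linarith [ht.1])
    rw [sin_neg, cos_neg] at this
    intro h0; linarith
  · exact (sin_sub_pos h ht.2).ne'

lemma PH_hasDerivAt (w : ℝ) : HasDerivAt PH (2 * sin (phiH w)) w := by
  refine hasDerivAt_of_hasDerivAt_of_ne' (x := 0) (g := fun w => 2 * sin (phiH w)) ?_
    PH_continuous.continuousAt
    (continuous_const.mul (continuous_sin.comp phiH_continuous)).continuousAt w
  intro w hw
  have ht : phiH w ≠ 0 := fun h => hw (phiH_eq_zero h)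
  have hs := sin_ne_zero' (phiH_mem w) ht
  have hd := sin_sub_ne (phiH_mem w) ht
  have h1 : HasDerivAt phiH ((sin (phiH w) - phiH w * cos (phiH w)) / (2 * sin (phiH w) ^ 3))⁻¹ w :=
    HasDerivAt.of_local_left_inverse phiH_continuous.continuousAt (muH_hasDerivAt hs)
      (div_ne_zero hd (by positivity)) (Eventually.of_forall muH_phiH)
  have h2 : HasDerivAt (fun t : ℝ => t / sin t)
      ((1 * sin (phiH w) - phiH w * cos (phiH w)) / sin (phiH w) ^ 2) (phiH w) :=
    (hasDerivAt_id _).div (hasDerivAt_sin _) hs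
  have h3 := h2.comp w h1
  have h4 : PH =ᶠ[𝓝 w] (fun t : ℝ => t / sin t) ∘ phiH := by
    filter_upwards [isOpen_ne.mem_nhds hw] with v hv
    simp [PH, sinc_of_ne_zero (fun h => hv (phiH_eq_zero h))]
  refine (h3.congr_of_eventuallyEq h4).congr_deriv ?_
  rw [one_mul]
  field_simp

lemma PH_identity (w : ℝ) : PH w - 4 * w * sin (phiH w) = cos (phiH w) := by
  by_cases h : phiH w = 0
  · simp [PH, h]
  · have hs := sin_ne_zero' (phiH_mem w) h
    have hw := muH_phiH w
    rw [muH, div_eq_iff (by positivity)] at hw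
    rw [PH, sinc_of_ne_zero h]
    field_simp
    linarith

lemma PH_contDiff : ContDiff ℝ 1 PH := by
  rw [contDiff_one_iff_deriv]
  refine ⟨fun w => (PH_hasDerivAt w).differentiableAt, ?_⟩
  have : deriv PH = fun w => 2 * sin (phiH w) := funext fun w => (PH_hasDerivAt w).deriv
  rw [this]
  exact continuous_const.mul (continuous_sin.comp phiH_continuous)

/-- Explicit formula for the distance function off the vertical axis. -/
def fH (x : Heis) : ℝ :=
  sqrt (x.1 ^ 2 + x.2.1 ^ 2) * PH (x.2.2 / (x.1 ^ 2 + x.2.1 ^ 2))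

lemma fH_contDiffAt {x : Heis} (hx : 0 < x.1 ^ 2 + x.2.1 ^ 2) : ContDiffAt ℝ 1 fH x := by
  have h1 : ContDiffAt ℝ 1 (fun x : Heis => x.1 ^ 2 + x.2.1 ^ 2) x := by fun_prop
  have h2 : ContDiffAt ℝ 1 (fun x : Heis => x.2.2) x := by fun_prop
  exact (h1.sqrt hx.ne').mul (PH_contDiff.contDiffAt.comp x (h2.div h1 hx.ne'))

lemma fH_hasFDerivAt {x : Heis} (hx : 0 < x.1 ^ 2 + x.2.1 ^ 2) :
    ∀ v : Heis, fderiv ℝ fH x v =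
      (cos (phiH (x.2.2 / (x.1 ^ 2 + x.2.1 ^ 2))) * (x.1 * v.1 + x.2.1 * v.2.1)
        + 2 * sin (phiH (x.2.2 / (x.1 ^ 2 + x.2.1 ^ 2))) * v.2.2)
        / sqrt (x.1 ^ 2 + x.2.1 ^ 2) := by
  intro v
  have hline : HasDerivAt (fun t : ℝ => fH (x + t • v)) (fderiv ℝ fH x v) 0 := by
    have h1 : HasDerivAt (fun t : ℝ => x + t • v) v 0 := by
      simpa using ((hasDerivAt_id (0 : ℝ)).smul_const v).const_add x
    have h2 : HasFDerivAt fH (fderiv ℝ fH x) (x + (0 : ℝ) • v) := by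
      simpa using ((fH_contDiffAt hx).differentiableAt (by norm_num)).hasFDerivAt
    exact h2.comp_hasDerivAt 0 h1
  refine hline.unique ?_
  have ha : HasDerivAt (fun t : ℝ => x.1 + t * v.1) v.1 0 := by
    simpa using ((hasDerivAt_id (0 : ℝ)).mul_const v.1).const_add x.1
  have hb : HasDerivAt (fun t : ℝ => x.2.1 + t * v.2.1) v.2.1 0 := by
    simpa using ((hasDerivAt_id (0 : ℝ)).mul_const v.2.1).const_add x.2.1
  have hc : HasDerivAt (fun t : ℝ => x.2.2 + t * v.2.2) v.2.2 0 := by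
    simpa using ((hasDerivAt_id (0 : ℝ)).mul_const v.2.2).const_add x.2.2
  have hq : HasDerivAt (fun t : ℝ => (x.1 + t * v.1) ^ 2 + (x.2.1 + t * v.2.1) ^ 2)
      (2 * (x.1 * v.1 + x.2.1 * v.2.1)) 0 := by
    refine ((ha.pow 2).add (hb.pow 2)).congr_deriv ?_
    simp; ring
  have hw := hc.div hq (by simpa using hx.ne')
  have hP := (PH_hasDerivAt _).comp (0 : ℝ) hw
  have hf := (hq.sqrt (by simpa using hx.ne')).mul hP
  refine hf.congr_deriv ?_
  simp only [zero_mul, add_zero, Function.comp, Pi.div_apply]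
  have hid := PH_identity (x.2.2 / (x.1 ^ 2 + x.2.1 ^ 2))
  set q := x.1 ^ 2 + x.2.1 ^ 2 with hqdef
  set s := sin (phiH (x.2.2 / q))
  set p := PH (x.2.2 / q)
  rw [← hid]
  have hr : 0 < sqrt q := sqrt_pos.2 hx
  have hrr : sqrt q ^ 2 = q := sq_sqrt hx.le
  clear_value q s p
  set r := sqrt q
  clear_value r
  subst hrr
  field_simp
  ring

lemma fH_hor_bound {x : Heis} (hx : 0 < x.1 ^ 2 + x.2.1 ^ 2) (a b : ℝ) :
    |fderiv ℝ fH x (a, b, (x.1 * b - x.2.1 * a) / 2)| ≤ sqrt (a ^ 2 + b ^ 2) := by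
  rw [fH_hasFDerivAt hx]
  apply abs_le_sqrt
  dsimp only
  rw [div_pow, sq_sqrt hx.le, div_le_iff₀ hx]
  have := sin_sq_add_cos_sq (phiH (x.2.2 / (x.1 ^ 2 + x.2.1 ^ 2)))
  set s := sin (phiH (x.2.2 / (x.1 ^ 2 + x.2.1 ^ 2)))
  set c := cos (phiH (x.2.2 / (x.1 ^ 2 + x.2.1 ^ 2)))
  have e : (a ^ 2 + b ^ 2) * (x.1 ^ 2 + x.2.1 ^ 2)
      = (s ^ 2 + c ^ 2) * ((x.1 * a + x.2.1 * b) ^ 2 + (x.1 * b - x.2.1 * a) ^ 2) := by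
    rw [this]; ring
  rw [e]
  nlinarith [sq_nonneg (s * (x.1 * a + x.2.1 * b) - c * (x.1 * b - x.2.1 * a))]

lemma fH_gradLen {x : Heis} (hx : 0 < x.1 ^ 2 + x.2.1 ^ 2) : gradLen fH x = 1 := by
  rw [gradLen, X1, X2]
  simp only [fH_hasFDerivAt hx]
  have := sin_sq_add_cos_sq (phiH (x.2.2 / (x.1 ^ 2 + x.2.1 ^ 2)))
  set s := sin (phiH (x.2.2 / (x.1 ^ 2 + x.2.1 ^ 2)))
  set c := cos (phiH (x.2.2 / (x.1 ^ 2 + x.2.1 ^ 2)))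
  rw [sqrt_eq_one]
  have hr : 0 < sqrt (x.1 ^ 2 + x.2.1 ^ 2) := sqrt_pos.2 hx
  have hrr := sq_sqrt hx.le
  set r := sqrt (x.1 ^ 2 + x.2.1 ^ 2)
  field_simp
  rw [hrr]
  linear_combination 4 * (x.1 ^ 2 + x.2.1 ^ 2) * this

lemma fH_flat (p : ℝ × ℝ) : fH (p.1, p.2, 0) = sqrt (p.1 ^ 2 + p.2 ^ 2) := by
  simp [fH, PH_zero]

lemma sq_pos_of_ne {p : ℝ × ℝ} (h : p ≠ 0) : 0 < p.1 ^ 2 + p.2 ^ 2 := by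
  by_contra hc
  apply h
  have h1 : p.1 = 0 := by nlinarith [sq_nonneg p.1, sq_nonneg p.2]
  have h2 : p.2 = 0 := by nlinarith [sq_nonneg p.1, sq_nonneg p.2]
  exact Prod.ext h1 h2

lemma path_bound {x y : Heis} (P : AdmissiblePath x y) (p : ℝ × ℝ)
    (hp : ∀ s ∈ Icc (0 : ℝ) 1, 0 < (p.1 + (P.γ s).1) ^ 2 + (p.2 + (P.γ s).2.1) ^ 2) :
    |fH (Hmul (p.1, p.2, 0) y) - fH (Hmul (p.1, p.2, 0) x)| ≤ pathLength P := by
  obtain ⟨K, hK⟩ := P.lipschitz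
  set η : ℝ → Heis := fun s => Hmul (p.1, p.2, 0) (P.γ s) with hη
  have hηpos : ∀ s ∈ Icc (0 : ℝ) 1, 0 < (η s).1 ^ 2 + (η s).2.1 ^ 2 := hp
  have hmulC : ContDiff ℝ 1 (fun z : Heis => Hmul (p.1, p.2, 0) z) := by
    unfold Hmul; fun_prop
  have hγc : ContinuousOn P.γ (Icc 0 1) := hK.continuousOn
  -- the composed function is Lipschitz
  obtain ⟨M, hM⟩ : ∃ M, LipschitzOnWith M (fun z => fH (Hmul (p.1, p.2, 0) z))
      (P.γ '' Icc 0 1) := by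
    apply LocallyLipschitzOn.exists_lipschitzOnWith_of_compact (isCompact_Icc.image_of_continuousOn hγc)
    rintro _ ⟨s, hs, rfl⟩
    have : ContDiffAt ℝ 1 (fun z => fH (Hmul (p.1, p.2, 0) z)) (P.γ s) :=
      ContDiffAt.comp (g := fH) (f := fun z : Heis => Hmul (p.1, p.2, 0) z) (P.γ s)
        (fH_contDiffAt (hηpos s hs)) hmulC.contDiffAt
    obtain ⟨C, t, ht, h⟩ := this.exists_lipschitzOnWith
    exact ⟨C, t, mem_nhdsWithin_of_mem_nhds ht, h⟩
  have hg : LipschitzOnWith (M * K) (fun s => fH (η s)) (uIcc 0 1) := by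
    rw [uIcc_of_le zero_le_one]
    exact hM.comp hK (mapsTo_image _ _)
  have hFTC := hg.absolutelyContinuousOnInterval.integral_deriv_eq_sub
  -- derivative along the path
  have hder : ∀ᵐ s ∂(volume.restrict (Icc (0:ℝ) 1)),
      ‖deriv (fun s => fH (η s)) s‖ ≤ sqrt (P.a1 s ^ 2 + P.a2 s ^ 2) := by
    filter_upwards [P.admissible, ae_restrict_mem measurableSet_Icc] with s hs hsI
    have h1 : HasDerivAt (fun s => (P.γ s).1) (P.a1 s) s := by
      simpa [Function.comp_def] using
        (ContinuousLinearMap.fst ℝ ℝ (ℝ × ℝ)).hasFDerivAt.comp_hasDerivAt s hs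
    have h2 : HasDerivAt (fun s => (P.γ s).2.1) (P.a2 s) s := by
      simpa [Function.comp_def] using
        (ContinuousLinearMap.fst ℝ ℝ ℝ).hasFDerivAt.comp_hasDerivAt s
          ((ContinuousLinearMap.snd ℝ ℝ (ℝ × ℝ)).hasFDerivAt.comp_hasDerivAt s hs)
    have h3 : HasDerivAt (fun s => (P.γ s).2.2)
        (P.a1 s * (-(P.γ s).2.1 / 2) + P.a2 s * ((P.γ s).1 / 2)) s := by
      simpa [Function.comp_def] using
        (ContinuousLinearMap.snd ℝ ℝ ℝ).hasFDerivAt.comp_hasDerivAt s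
          ((ContinuousLinearMap.snd ℝ ℝ (ℝ × ℝ)).hasFDerivAt.comp_hasDerivAt s hs)
    have h4 : HasDerivAt η (P.a1 s, P.a2 s, ((η s).1 * P.a2 s - (η s).2.1 * P.a1 s) / 2) s := by
      refine (h1.const_add p.1).prodMk ((h2.const_add p.2).prodMk ?_)
      refine ((h3.const_add 0).add (((h2.const_mul p.1).sub (h1.const_mul p.2)).div_const 2)).congr_deriv ?_
      simp only [hη, Hmul]; ring
    have h5 := ((fH_contDiffAt (hηpos s hsI)).differentiableAt (by norm_num)).hasFDerivAt.comp_hasDerivAt s h4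
    have h6 : deriv (fun s => fH (η s)) s = _ := h5.deriv
    rw [h6, Real.norm_eq_abs]
    exact fH_hor_bound (hηpos s hsI) _ _
  -- integrability of the speed
  have hspeed : IntegrableOn (fun s => sqrt (P.a1 s ^ 2 + P.a2 s ^ 2)) (Icc (0:ℝ) 1) := by
    have hm : Measurable (fun s => sqrt (P.a1 s ^ 2 + P.a2 s ^ 2)) :=
      ((P.meas1.pow_const 2).add (P.meas2.pow_const 2)).sqrt
    refine Measure.integrableOn_of_bounded (M := 2 * K) (by simp) hm.aestronglyMeasurable ?_
    have hIoo : ∀ᵐ s ∂(volume.restrict (Icc (0:ℝ) 1)), s ∈ Ioo (0:ℝ) 1 := by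
      rw [← restrict_Ioo_eq_restrict_Icc]
      exact ae_restrict_mem measurableSet_Ioo
    filter_upwards [P.admissible, hIoo] with s hs hsI
    have hn := hs.le_of_lipschitzOn (Icc_mem_nhds hsI.1 hsI.2) hK
    have e1 : |P.a1 s| ≤ K := by
      refine le_trans ?_ hn
      have := norm_fst_le (P.a1 s • (((1 : ℝ), (0 : ℝ), -(P.γ s).2.1 / 2) : Heis)
        + P.a2 s • (((0 : ℝ), (1 : ℝ), (P.γ s).1 / 2) : Heis))
      simpa using this
    have e2 : |P.a2 s| ≤ K := by
      refine le_trans ?_ hn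
      have h1 := norm_snd_le (P.a1 s • (((1 : ℝ), (0 : ℝ), -(P.γ s).2.1 / 2) : Heis)
        + P.a2 s • (((0 : ℝ), (1 : ℝ), (P.γ s).1 / 2) : Heis))
      have h2 := norm_fst_le (P.a1 s • (((1 : ℝ), (0 : ℝ), -(P.γ s).2.1 / 2) : Heis)
        + P.a2 s • (((0 : ℝ), (1 : ℝ), (P.γ s).1 / 2) : Heis)).2
      refine le_trans ?_ (h2.trans h1)
      simp
    rw [Real.norm_eq_abs, abs_of_nonneg (sqrt_nonneg _)]
    apply sqrt_le_iff.2 ⟨by positivity, ?_⟩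
    have f1 := sq_le_sq' (by linarith [neg_abs_le (P.a1 s)]) ((le_abs_self _).trans e1)
    have f2 := sq_le_sq' (by linarith [neg_abs_le (P.a2 s)]) ((le_abs_self _).trans e2)
    nlinarith [sq_nonneg (K : ℝ)]
  have e0 : fH (Hmul (p.1, p.2, 0) y) - fH (Hmul (p.1, p.2, 0) x)
      = ∫ s in Icc (0:ℝ) 1, deriv (fun s => fH (η s)) s := by
    rw [integral_Icc_eq_integral_Ioc, ← intervalIntegral.integral_of_le zero_le_one, hFTC]
    simp only [hη, P.start, P.endpoint]
  rw [e0, ← Real.norm_eq_abs, pathLength]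
  exact norm_integral_le_of_norm_le hspeed hder

lemma path_lower {x : Heis} (hx : 0 < x.1 ^ 2 + x.2.1 ^ 2) (P : AdmissiblePath x He) :
    fH x ≤ pathLength P := by
  obtain ⟨K, hK⟩ := P.lipschitz
  set Z : Set (ℝ × ℝ) := (fun s => (-(P.γ s).1, -(P.γ s).2.1)) '' Icc (0:ℝ) 1 with hZ
  have hdim : dimH Z < Module.finrank ℝ (ℝ × ℝ) := by
    have hl : LipschitzWith 1 (fun z : Heis => ((-z.1, -z.2.1) : ℝ × ℝ)) := by
      refine LipschitzWith.of_dist_le_mul fun a b => ?_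
      simp only [Prod.dist_eq, dist_neg_neg, NNReal.coe_one, one_mul]
      exact max_le_max le_rfl (le_max_left _ _)
    have := (hl.comp_lipschitzOnWith hK).dimH_image_le
    refine lt_of_le_of_lt this (lt_of_le_of_lt (dimH_mono (subset_univ _)) ?_)
    rw [Real.dimH_univ]
    simp
  have hdense : Dense Zᶜ := dense_compl_of_dimH_lt_finrank hdim
  have hne : (𝓝[Zᶜ] (0 : ℝ × ℝ)).NeBot := mem_closure_iff_nhdsWithin_neBot.1 (hdense 0)
  have hb : ∀ᶠ p in 𝓝[Zᶜ] (0 : ℝ × ℝ),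
      fH (Hmul (p.1, p.2, 0) x) - sqrt (p.1 ^ 2 + p.2 ^ 2) ≤ pathLength P := by
    filter_upwards [self_mem_nhdsWithin] with p hp
    have := path_bound P p ?_
    · have e : Hmul (p.1, p.2, 0) He = (p.1, p.2, 0) := by simp [Hmul, He]
      rw [e, fH_flat, abs_sub_comm] at this
      exact (le_abs_self _).trans this
    · intro s hs
      refine sq_pos_of_ne (p := (p.1 + (P.γ s).1, p.2 + (P.γ s).2.1)) ?_
      intro h0
      apply hp
      refine ⟨s, hs, ?_⟩
      simp only [Prod.mk_eq_zero] at h0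
      exact Prod.ext (by simp only; linarith [h0.1]) (by simp only; linarith [h0.2])
  refine le_of_tendsto ?_ hb
  apply tendsto_nhdsWithin_of_tendsto_nhds
  have hc : ContinuousAt (fun p : ℝ × ℝ => Hmul (p.1, p.2, 0) x) 0 := by
    unfold Hmul; fun_prop
  have e : Hmul ((0 : ℝ × ℝ).1, (0 : ℝ × ℝ).2, 0) x = x := by simp [Hmul]
  have hf : ContinuousAt (fun p : ℝ × ℝ => fH (Hmul (p.1, p.2, 0) x)) 0 := by
    refine ContinuousAt.comp (g := fH) ?_ hc
    rw [e]; exact (fH_contDiffAt hx).continuousAt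
  have hs : ContinuousAt (fun p : ℝ × ℝ => sqrt (p.1 ^ 2 + p.2 ^ 2)) 0 := by fun_prop
  have h : Tendsto (fun p : ℝ × ℝ => fH (Hmul (p.1, p.2, 0) x) - sqrt (p.1 ^ 2 + p.2 ^ 2)) (𝓝 0)
      (𝓝 (fH (Hmul ((0 : ℝ × ℝ).1, (0 : ℝ × ℝ).2, 0) x)
        - sqrt ((0 : ℝ × ℝ).1 ^ 2 + (0 : ℝ × ℝ).2 ^ 2))) := (hf.sub hs).tendsto
  rw [e] at h
  simpa using h

lemma path_upper {x : Heis} (hx : 0 < x.1 ^ 2 + x.2.1 ^ 2) :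
    ∃ P : AdmissiblePath x He, fH x = pathLength P := by
  obtain ⟨x1, x2, x3⟩ := x
  simp only at hx
  have hw := muH_phiH (x3 / (x1 ^ 2 + x2 ^ 2))
  have hmem := phiH_mem (x3 / (x1 ^ 2 + x2 ^ 2))
  have hfx : fH (x1, x2, x3) = sqrt (x1 ^ 2 + x2 ^ 2) * (sinc (phiH (x3 / (x1 ^ 2 + x2 ^ 2))))⁻¹ := rfl
  set t := phiH (x3 / (x1 ^ 2 + x2 ^ 2)) with ht
  clear_value t
  by_cases h0 : t = 0
  · subst h0
    have hx3 : x3 = 0 := by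
      rw [muH_zero] at hw
      have := hw.symm
      rw [div_eq_zero_iff] at this
      rcases this with h | h
      · exact h
      · exact absurd h hx.ne'
    subst hx3
    have hd : ∀ s : ℝ, HasDerivAt (fun s : ℝ => (((1 - s) * x1, (1 - s) * x2, 0) : Heis))
        (-x1, -x2, 0) s := by
      intro s
      have h : HasDerivAt (fun s : ℝ => 1 - s) (-1) s := by
        simpa using (hasDerivAt_id s).const_sub 1
      refine (HasDerivAt.prodMk ?_ (HasDerivAt.prodMk ?_ (hasDerivAt_const _ _)))
      · simpa using h.mul_const x1
      · simpa using h.mul_const x2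
    have hC : ContDiff ℝ 1 (fun s : ℝ => (((1 - s) * x1, (1 - s) * x2, 0) : Heis)) := by fun_prop
    refine ⟨⟨fun s => ((1 - s) * x1, (1 - s) * x2, 0), fun _ => -x1, fun _ => -x2, ?_,
      measurable_const, measurable_const, by simp, by simp [He], ?_⟩, ?_⟩
    · exact hC.contDiffOn.exists_lipschitzOnWith one_ne_zero (convex_Icc _ _) isCompact_Icc
    · refine Eventually.of_forall fun s => (hd s).congr_deriv ?_
      refine Prod.ext ?_ (Prod.ext ?_ ?_)
      · simp
      · simp
      · simp; ring
    · rw [hfx]; simp [pathLength]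
  · have hs := sin_ne_zero' hmem h0
    have hsinc := sinc_pos' hmem
    rw [sinc_of_ne_zero h0] at hfx hsinc
    set g : ℝ → Heis := fun s =>
      (sin (t * (1 - s)) / sin t * (x1 * cos (t * s) + x2 * sin (t * s)),
        sin (t * (1 - s)) / sin t * (x2 * cos (t * s) - x1 * sin (t * s)),
        (x1 ^ 2 + x2 ^ 2) / (4 * sin t ^ 2) *
          (t * (1 - s) - sin (t * (1 - s)) * cos (t * (1 - s)))) with hg
    have hC : ContDiff ℝ 1 g := by
      rw [hg]; fun_prop
    set b1 : ℝ → ℝ := fun s => - (t / sin t * (x1 * cos (t - 2 * (t * s)) - x2 * sin (t - 2 * (t * s)))) with hb1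
    set b2 : ℝ → ℝ := fun s => - (t / sin t * (x2 * cos (t - 2 * (t * s)) + x1 * sin (t - 2 * (t * s)))) with hb2
    have hd : ∀ s : ℝ, HasDerivAt g (b1 s • (((1 : ℝ), (0 : ℝ), -(g s).2.1 / 2) : Heis)
      + b2 s • (((0 : ℝ), (1 : ℝ), (g s).1 / 2) : Heis)) s := by
      intro s
      have hA : HasDerivAt (fun s : ℝ => t * s) t s := by simpa using (hasDerivAt_id s).const_mul t
      have hB : HasDerivAt (fun s : ℝ => t * (1 - s)) (-t) s := by
        simpa using ((hasDerivAt_id s).const_sub 1).const_mul t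
      have hsB := hB.sin
      have hcB := hB.cos
      have hsA := hA.sin
      have hcA := hA.cos
      have eq1 : t - 2 * (t * s) = t * (1 - s) - t * s := by ring
      have k1 := sin_sq_add_cos_sq (t * s)
      have k2 := sin_sq_add_cos_sq (t * (1 - s))
      have k3 : sin t = sin (t * (1 - s)) * cos (t * s) + cos (t * (1 - s)) * sin (t * s) := by
        rw [← sin_add]; congr 1; ring
      have hb1s : b1 s = -(t / sin t * (x1 * (cos (t * (1 - s)) * cos (t * s) + sin (t * (1 - s)) * sin (t * s))
          - x2 * (sin (t * (1 - s)) * cos (t * s) - cos (t * (1 - s)) * sin (t * s)))) := by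
        simp only [hb1]
        rw [eq1, cos_sub, sin_sub]
      have hb2s : b2 s = -(t / sin t * (x2 * (cos (t * (1 - s)) * cos (t * s) + sin (t * (1 - s)) * sin (t * s))
          + x1 * (sin (t * (1 - s)) * cos (t * s) - cos (t * (1 - s)) * sin (t * s)))) := by
        simp only [hb2]
        rw [eq1, cos_sub, sin_sub]
      have key : HasDerivAt g (b1 s, b2 s, ((g s).1 * b2 s - (g s).2.1 * b1 s) / 2) s := by
        refine HasDerivAt.prodMk ?_ (HasDerivAt.prodMk ?_ ?_)
        · refine ((hsB.div_const (sin t)).mul ((hcA.const_mul x1).add (hsA.const_mul x2))).congr_deriv ?_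
          rw [hb1s]
          simp only [Pi.add_apply, Pi.sub_apply]
          field_simp
          ring
        · refine ((hsB.div_const (sin t)).mul ((hcA.const_mul x2).sub (hsA.const_mul x1))).congr_deriv ?_
          rw [hb2s]
          simp only [Pi.add_apply, Pi.sub_apply]
          field_simp
          ring
        · refine ((hB.sub (hsB.mul hcB)).const_mul ((x1 ^ 2 + x2 ^ 2) / (4 * sin t ^ 2))).congr_deriv ?_
          rw [hb1s, hb2s]
          simp only [hg]
          field_simp
          linear_combination 2 * (x1 ^ 2 + x2 ^ 2) * k2 + 4 * (x1 ^ 2 + x2 ^ 2) * sin (t * (1 - s)) ^ 2 * k1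
      refine key.congr_deriv ?_
      refine Prod.ext ?_ (Prod.ext ?_ ?_)
      · simp
      · simp
      · simp; ring
    refine ⟨⟨g, b1, b2, ?_, by fun_prop, by fun_prop, ?_, ?_, Eventually.of_forall hd⟩, ?_⟩
    · exact hC.contDiffOn.exists_lipschitzOnWith one_ne_zero (convex_Icc _ _) isCompact_Icc
    · simp only [hg]
      refine Prod.ext ?_ (Prod.ext ?_ ?_)
      · simp [hs]
      · simp [hs]
      · simp only [sub_zero, mul_one]
        rw [muH, div_eq_div_iff (by positivity) hx.ne'] at hw
        field_simp
        linarith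
    · simp [hg, He]
    · rw [hfx, pathLength]
      have : ∀ s, sqrt (b1 s ^ 2 + b2 s ^ 2) = sqrt (x1 ^ 2 + x2 ^ 2) * (sin t / t)⁻¹ := by
        intro s
        rw [← sqrt_sq (inv_pos.2 hsinc).le, ← sqrt_mul hx.le]
        congr 1
        have k1 := sin_sq_add_cos_sq (t - 2 * (t * s))
        simp only [hb1, hb2, inv_div]
        linear_combination (t / sin t) ^ 2 * (x1 ^ 2 + x2 ^ 2) * k1
      simp [this]

lemma ccNorm_eq {x : Heis} (hx : 0 < x.1 ^ 2 + x.2.1 ^ 2) : ccNorm x = fH x := by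
  obtain ⟨P, hP⟩ := path_upper hx
  have hl : ∀ l ∈ {l : ℝ | ∃ p : AdmissiblePath x He, l = pathLength p}, fH x ≤ l := by
    rintro _ ⟨p, rfl⟩
    exact path_lower hx p
  exact le_antisymm (csInf_le ⟨_, hl⟩ ⟨P, hP⟩) (le_csInf ⟨_, P, hP⟩ hl)

end

/-- The eikonal equation: at every `x = (x₁,x₂,x₃)` with `(x₁,x₂) ≠ (0,0)`, the
Carnot–Carathéodory distance to the identity is differentiable and its sub-gradient
has length `1`:  `|∇d(x)| = ((X₁ d(x))² + (X₂ d(x))²)^{1/2} = 1`. -/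
theorem heisenberg_eikonal (x : Heis) (hx : (x.1, x.2.1) ≠ ((0 : ℝ), (0 : ℝ))) :
    DifferentiableAt ℝ ccNorm x ∧ gradLen ccNorm x = 1 := by
  have hx' : 0 < x.1 ^ 2 + x.2.1 ^ 2 := sq_pos_of_ne (p := (x.1, x.2.1)) hx
  have hev : ccNorm =ᶠ[nhds x] fH := by
    have ho : IsOpen {y : Heis | 0 < y.1 ^ 2 + y.2.1 ^ 2} :=
      isOpen_lt continuous_const (by fun_prop)
    filter_upwards [ho.mem_nhds hx'] with y hy
    exact ccNorm_eq hy
  constructor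
  · exact (((fH_contDiffAt hx').differentiableAt (by norm_num)).congr_of_eventuallyEq hev)
  · rw [← fH_gradLen hx']
    simp only [gradLen, X1, X2, hev.fderiv_eq]
end

section
/- There exists a constant K > 0 such that Δd ≤ K/d in the sense of distributions on ℍ: for every nonnegative smooth compactly supported function φ:ℝ³→ℝ, ∫_{ℝ³} d(x)·Δφ(x) dx ≤ K ∫_{ℝ³} φ(x)/d(x) dx. -/
open MeasureTheory Real Filter

noncomputable abbrev mu01 : Measure ℝ := volume.restrict (Set.Icc (0:ℝ) 1)

structure Bd (f : ℝ → ℝ) : Prop where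
  meas : AEStronglyMeasurable f mu01
  bdd : ∃ C : ℝ, ∀ᵐ s ∂mu01, |f s| ≤ C

namespace Bd

theorem integrable {f : ℝ → ℝ} (hf : Bd f) : Integrable f mu01 := by
  obtain ⟨C, hC⟩ := hf.bdd
  exact Integrable.of_bound hf.meas C (by simpa using hC)

theorem const (c : ℝ) : Bd (fun _ => c) :=
  ⟨aestronglyMeasurable_const, |c|, by simp⟩

theorem add {f g : ℝ → ℝ} (hf : Bd f) (hg : Bd g) : Bd (fun s => f s + g s) := by
  obtain ⟨C, hC⟩ := hf.bdd
  obtain ⟨D, hD⟩ := hg.bdd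
  refine ⟨hf.meas.add hg.meas, C + D, ?_⟩
  filter_upwards [hC, hD] with s h1 h2
  exact (abs_add_le _ _).trans (add_le_add h1 h2)

theorem mul {f g : ℝ → ℝ} (hf : Bd f) (hg : Bd g) : Bd (fun s => f s * g s) := by
  obtain ⟨C, hC⟩ := hf.bdd
  obtain ⟨D, hD⟩ := hg.bdd
  refine ⟨hf.meas.mul hg.meas, C * D, ?_⟩
  filter_upwards [hC, hD] with s h1 h2
  rw [abs_mul]
  exact mul_le_mul h1 h2 (abs_nonneg _) ((abs_nonneg _).trans h1)

theorem neg {f : ℝ → ℝ} (hf : Bd f) : Bd (fun s => - f s) := by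
  have := (Bd.const (-1)).mul hf
  simpa using this

theorem sub {f g : ℝ → ℝ} (hf : Bd f) (hg : Bd g) : Bd (fun s => f s - g s) := by
  have := hf.add hg.neg
  simpa [sub_eq_add_neg] using this

theorem pow {f : ℝ → ℝ} (hf : Bd f) (n : ℕ) : Bd (fun s => f s ^ n) := by
  induction n with
  | zero => simpa using Bd.const 1
  | succ k ih => simpa [pow_succ] using ih.mul hf

theorem cmul {f : ℝ → ℝ} (c : ℝ) (hf : Bd f) : Bd (fun s => c * f s) := (Bd.const c).mul hf

theorem abs {f : ℝ → ℝ} (hf : Bd f) : Bd (fun s => |f s|) := by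
  obtain ⟨C, hC⟩ := hf.bdd
  exact ⟨hf.meas.norm, C, by simpa using hC⟩

theorem sqrt {f : ℝ → ℝ} (hf : Bd f) : Bd (fun s => Real.sqrt (f s)) := by
  obtain ⟨C, hC⟩ := hf.bdd
  refine ⟨Real.continuous_sqrt.comp_aestronglyMeasurable hf.meas, Real.sqrt C, ?_⟩
  filter_upwards [hC] with s h
  rw [abs_of_nonneg (Real.sqrt_nonneg _)]
  exact Real.sqrt_le_sqrt ((le_abs_self _).trans h)

theorem of_continuousOn {f : ℝ → ℝ} (hf : ContinuousOn f (Set.Icc 0 1)) : Bd f := by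
  refine ⟨hf.aestronglyMeasurable measurableSet_Icc, ?_⟩
  obtain ⟨C, hC⟩ := isCompact_Icc.exists_bound_of_continuousOn hf
  refine ⟨C, ?_⟩
  rw [ae_restrict_iff' measurableSet_Icc]
  exact Eventually.of_forall hC

end Bd

theorem J_add {f g : ℝ → ℝ} (hf : Bd f) (hg : Bd g) :
    ∫ s, (f s + g s) ∂mu01 = ∫ s, f s ∂mu01 + ∫ s, g s ∂mu01 :=
  integral_add hf.integrable hg.integrable

theorem J_sub {f g : ℝ → ℝ} (hf : Bd f) (hg : Bd g) :
    ∫ s, (f s - g s) ∂mu01 = ∫ s, f s ∂mu01 - ∫ s, g s ∂mu01 :=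
  integral_sub hf.integrable hg.integrable

theorem J_cmul (c : ℝ) (f : ℝ → ℝ) :
    ∫ s, (c * f s) ∂mu01 = c * ∫ s, f s ∂mu01 := integral_const_mul c f

theorem J_mono {f g : ℝ → ℝ} (hf : Bd f) (hg : Bd g) (h : ∀ᵐ s ∂mu01, f s ≤ g s) :
    ∫ s, f s ∂mu01 ≤ ∫ s, g s ∂mu01 :=
  integral_mono_ae hf.integrable hg.integrable h

theorem J_abs_le {f g : ℝ → ℝ} (hg : Bd g) (h : ∀ᵐ s ∂mu01, |f s| ≤ g s) :
    |∫ s, f s ∂mu01| ≤ ∫ s, g s ∂mu01 := by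
  have := norm_integral_le_of_norm_le (f := f) hg.integrable (by simpa using h)
  simpa using this

structure Prim (F f : ℝ → ℝ) : Prop where
  lip : ∃ K : NNReal, LipschitzOnWith K F (Set.Icc 0 1)
  der : ∀ᵐ s ∂mu01, HasDerivAt F (f s) s

theorem ae_Ioo : ∀ᵐ s ∂mu01, s ∈ Set.Ioo (0:ℝ) 1 := by
  rw [mu01, ← restrict_Ioo_eq_restrict_Icc]
  exact ae_restrict_mem measurableSet_Ioo

theorem ae_Icc : ∀ᵐ s ∂mu01, s ∈ Set.Icc (0:ℝ) 1 := ae_restrict_mem measurableSet_Icc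

namespace Prim

theorem continuousOn {F f : ℝ → ℝ} (h : Prim F f) : ContinuousOn F (Set.Icc 0 1) := by
  obtain ⟨K, hK⟩ := h.lip
  exact hK.continuousOn

theorem bdF {F f : ℝ → ℝ} (h : Prim F f) : Bd F := Bd.of_continuousOn h.continuousOn

theorem bd {F f : ℝ → ℝ} (h : Prim F f) : Bd f := by
  obtain ⟨K, hK⟩ := h.lip
  refine ⟨(measurable_deriv F).aestronglyMeasurable.congr ?_, K, ?_⟩
  · filter_upwards [h.der] with s hs using hs.deriv
  · filter_upwards [h.der, ae_Ioo] with s hs hI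
    have := hs.hasFDerivAt.le_of_lipschitzOn (Icc_mem_nhds hI.1 hI.2) hK
    simpa using this

theorem congr {F f g : ℝ → ℝ} (h : Prim F f) (hg : ∀ᵐ s ∂mu01, f s = g s) : Prim F g := by
  refine ⟨h.lip, ?_⟩
  filter_upwards [h.der, hg] with s h1 h2
  rwa [← h2]

theorem const (c : ℝ) : Prim (fun _ => c) (fun _ => 0) :=
  ⟨⟨0, (LipschitzWith.const c).lipschitzOnWith⟩, Eventually.of_forall fun s => hasDerivAt_const s c⟩

theorem add {F f G g : ℝ → ℝ} (h : Prim F f) (k : Prim G g) :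
    Prim (fun s => F s + G s) (fun s => f s + g s) := by
  obtain ⟨K, hK⟩ := h.lip
  obtain ⟨M, hM⟩ := k.lip
  refine ⟨⟨K + M, hK.add hM⟩, ?_⟩
  filter_upwards [h.der, k.der] with s h1 h2 using h1.add h2

theorem mul {F f G g : ℝ → ℝ} (h : Prim F f) (k : Prim G g) :
    Prim (fun s => F s * G s) (fun s => f s * G s + F s * g s) := by
  obtain ⟨K, hK⟩ := h.lip
  obtain ⟨M, hM⟩ := k.lip
  obtain ⟨C, hC⟩ := isCompact_Icc.exists_bound_of_continuousOn h.continuousOn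
  obtain ⟨D, hD⟩ := isCompact_Icc.exists_bound_of_continuousOn k.continuousOn
  refine ⟨⟨K * Real.nnabs D + Real.nnabs C * M, LipschitzOnWith.of_dist_le_mul ?_⟩, ?_⟩
  · intro x hx y hy
    have h1 := hK.dist_le_mul x hx y hy
    have h2 := hM.dist_le_mul x hx y hy
    have h3 := hC x hx
    have h4 := hD y hy
    rw [Real.dist_eq] at h1 h2 ⊢
    rw [Real.norm_eq_abs] at h3 h4
    have e : F x * G x - F y * G y = (F x - F y) * G y + F x * (G x - G y) := by ring
    rw [e]
    refine (abs_add_le _ _).trans ?_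
    rw [abs_mul, abs_mul]
    have h5 : |F x - F y| * |G y| ≤ (K * dist x y) * |D| :=
      mul_le_mul h1 (h4.trans (le_abs_self _)) (abs_nonneg _) (by positivity)
    have h6 : |F x| * |G x - G y| ≤ |C| * (M * dist x y) :=
      mul_le_mul (h3.trans (le_abs_self _)) h2 (abs_nonneg _) (by positivity)
    push_cast
    linarith
  · filter_upwards [h.der, k.der] with s h1 h2 using h1.mul h2

theorem cmul {F f : ℝ → ℝ} (c : ℝ) (h : Prim F f) :
    Prim (fun s => c * F s) (fun s => c * f s) := by
  have := (Prim.const c).mul h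
  simpa using this

theorem integral {F f : ℝ → ℝ} (h : Prim F f) : ∫ s, f s ∂mu01 = F 1 - F 0 := by
  obtain ⟨K, hK⟩ := h.lip
  have hac : AbsolutelyContinuousOnInterval F 0 1 :=
    LipschitzOnWith.absolutelyContinuousOnInterval (K := K) (by rwa [Set.uIcc_of_le zero_le_one])
  rw [← hac.integral_deriv_eq_sub, intervalIntegral.integral_of_le zero_le_one,
    ← integral_Icc_eq_integral_Ioc]
  apply integral_congr_ae
  filter_upwards [h.der] with s hs using hs.deriv.symm

theorem of_bd {f : ℝ → ℝ} (hf : Bd f) : Prim (fun s => ∫ t in (0:ℝ)..s, f t) f := by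
  obtain ⟨C, hC⟩ := hf.bdd
  have hIntg : IntervalIntegrable f volume 0 1 := by
    rw [intervalIntegrable_iff_integrableOn_Icc_of_le zero_le_one]
    exact hf.integrable
  constructor
  · refine ⟨Real.nnabs C, LipschitzOnWith.of_dist_le_mul ?_⟩
    intro x hx y hy
    have hx' : IntervalIntegrable f volume 0 x := hIntg.mono_set (by
      rw [Set.uIcc_of_le hx.1, Set.uIcc_of_le zero_le_one]; exact Set.Icc_subset_Icc_right hx.2)
    have hy' : IntervalIntegrable f volume 0 y := hIntg.mono_set (by
      rw [Set.uIcc_of_le hy.1, Set.uIcc_of_le zero_le_one]; exact Set.Icc_subset_Icc_right hy.2)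
    rw [Real.dist_eq, intervalIntegral.integral_interval_sub_left hx' hy', ← Real.norm_eq_abs]
    have : ∀ᵐ t, t ∈ Set.uIoc y x → ‖f t‖ ≤ |C| := by
      have hC' := (ae_restrict_iff' measurableSet_Icc).1 hC
      filter_upwards [hC'] with t ht hm
      have : t ∈ Set.Icc (0:ℝ) 1 := by
        have := Set.uIoc_subset_uIcc hm
        rcases Set.mem_uIcc.1 this with h | h
        · exact ⟨hy.1.trans h.1, h.2.trans hx.2⟩
        · exact ⟨hx.1.trans h.1, h.2.trans hy.2⟩
      exact (ht this).trans (le_abs_self _)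
    have h2 := intervalIntegral.norm_integral_le_of_norm_le_const_ae this
    rw [Real.dist_eq, Real.coe_nnabs]
    exact h2
  · have := hIntg.ae_hasDerivAt_integral
    rw [ae_restrict_iff' measurableSet_Icc]
    filter_upwards [this] with s hs hI
    rw [Set.uIcc_of_le zero_le_one] at hs
    exact hs hI 0 (by simp)

end Prim

theorem pathLength_nonneg {x y : Heis} (p : AdmissiblePath x y) : 0 ≤ pathLength p :=
  integral_nonneg fun _ => Real.sqrt_nonneg _

theorem ccNorm_nonneg (x : Heis) : 0 ≤ ccNorm x := by
  apply Real.sInf_nonneg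
  rintro l ⟨p, rfl⟩
  exact pathLength_nonneg p

theorem ccNorm_le_pathLength {x : Heis} (p : AdmissiblePath x He) : ccNorm x ≤ pathLength p := by
  apply csInf_le
  · refine ⟨0, ?_⟩
    rintro l ⟨p, rfl⟩
    exact pathLength_nonneg p
  · exact ⟨p, rfl⟩

theorem exists_path_of_prim {G1 G2 b1 b2 : ℝ → ℝ} (h1 : Prim G1 b1) (h2 : Prim G2 b2)
    (e1 : G1 1 = 0) (e2 : G2 1 = 0) :
    ∃ p : AdmissiblePath
      ((G1 0, G2 0, -(1/2) * ∫ s, (G1 s * b2 s - G2 s * b1 s) ∂mu01) : Heis) He,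
      pathLength p = ∫ s, Real.sqrt (b1 s ^ 2 + b2 s ^ 2) ∂mu01 := by
  have hbd : Bd (fun s => (1/2) * (G1 s * b2 s - G2 s * b1 s)) :=
    Bd.cmul _ ((h1.bdF.mul h2.bd).sub (h2.bdF.mul h1.bd))
  set z := -(1/2) * ∫ s, (G1 s * b2 s - G2 s * b1 s) ∂mu01 with hz
  have h3 := (Prim.const z).add (Prim.of_bd hbd)
  set G3 : ℝ → ℝ := fun s => z + ∫ t in (0:ℝ)..s, (1/2) * (G1 t * b2 t - G2 t * b1 t) with hG3
  have e30 : G3 0 = z := by simp [hG3]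
  have e31 : G3 1 = 0 := by
    have h := h3.integral
    rw [e30] at h
    have h' : ∫ s, (0 + (1/2) * (G1 s * b2 s - G2 s * b1 s)) ∂mu01
        = (1/2) * ∫ s, (G1 s * b2 s - G2 s * b1 s) ∂mu01 := by
      simp only [zero_add]
      exact J_cmul _ _
    rw [h'] at h
    linarith
  obtain ⟨K1, hK1⟩ := h1.lip
  obtain ⟨K2, hK2⟩ := h2.lip
  obtain ⟨K3, hK3⟩ := h3.lip
  refine ⟨⟨fun s => (G1 s, G2 s, G3 s), deriv G1, deriv G2,
    ⟨_, hK1.prodMk (hK2.prodMk hK3)⟩, measurable_deriv _, measurable_deriv _, ?_, ?_, ?_⟩, ?_⟩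
  · simp [e30]
  · simp [e1, e2, e31, He]
  · filter_upwards [h1.der, h2.der, h3.der] with s d1 d2 d3
    have := d1.prodMk (d2.prodMk d3)
    convert this using 1
    rw [d1.deriv, d2.deriv]
    ext <;> simp
    ring
  · unfold pathLength
    apply integral_congr_ae
    filter_upwards [h1.der, h2.der] with s d1 d2
    simp only [d1.deriv, d2.deriv]

theorem ccNorm_le_of_prim {G1 G2 b1 b2 : ℝ → ℝ} (h1 : Prim G1 b1) (h2 : Prim G2 b2)
    (e1 : G1 1 = 0) (e2 : G2 1 = 0) :
    ccNorm ((G1 0, G2 0, -(1/2) * ∫ s, (G1 s * b2 s - G2 s * b1 s) ∂mu01) : Heis)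
      ≤ ∫ s, Real.sqrt (b1 s ^ 2 + b2 s ^ 2) ∂mu01 := by
  obtain ⟨p, hp⟩ := exists_path_of_prim h1 h2 e1 e2
  rw [← hp]
  exact ccNorm_le_pathLength p

theorem prim_of_path {x : Heis} (p : AdmissiblePath x He) :
    ∃ P1 P2 a1 a2 : ℝ → ℝ, Prim P1 a1 ∧ Prim P2 a2 ∧ P1 0 = x.1 ∧ P2 0 = x.2.1 ∧
      P1 1 = 0 ∧ P2 1 = 0 ∧ x.2.2 = -(1/2) * ∫ s, (P1 s * a2 s - P2 s * a1 s) ∂mu01 ∧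
      ∫ s, Real.sqrt (a1 s ^ 2 + a2 s ^ 2) ∂mu01 = pathLength p := by
  obtain ⟨K, hK⟩ := p.lipschitz
  have k1 : LipschitzOnWith K (fun s => (p.γ s).1) (Set.Icc 0 1) := by
    have := (LipschitzWith.prod_fst (α := ℝ) (β := ℝ × ℝ)).comp_lipschitzOnWith hK
    simpa [Function.comp_def] using this
  have k23 : LipschitzOnWith K (fun s => (p.γ s).2) (Set.Icc 0 1) := by
    have := (LipschitzWith.prod_snd (α := ℝ) (β := ℝ × ℝ)).comp_lipschitzOnWith hK
    simpa [Function.comp_def] using this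
  have k2 : LipschitzOnWith K (fun s => (p.γ s).2.1) (Set.Icc 0 1) := by
    have := (LipschitzWith.prod_fst (α := ℝ) (β := ℝ)).comp_lipschitzOnWith k23
    simpa [Function.comp_def] using this
  have k3 : LipschitzOnWith K (fun s => (p.γ s).2.2) (Set.Icc 0 1) := by
    have := (LipschitzWith.prod_snd (α := ℝ) (β := ℝ)).comp_lipschitzOnWith k23
    simpa [Function.comp_def] using this
  have h1 : Prim (fun s => (p.γ s).1) p.a1 := by
    refine ⟨⟨K, k1⟩, ?_⟩
    filter_upwards [p.admissible] with s hs
    have := hasFDerivAt_fst.comp_hasDerivAt s hs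
    simpa [Function.comp_def] using this
  have h2 : Prim (fun s => (p.γ s).2.1) p.a2 := by
    refine ⟨⟨K, k2⟩, ?_⟩
    filter_upwards [p.admissible] with s hs
    have := hasFDerivAt_fst.comp_hasDerivAt s (hasFDerivAt_snd.comp_hasDerivAt s hs)
    simpa [Function.comp_def] using this
  have h3 : Prim (fun s => (p.γ s).2.2)
      (fun s => (1/2) * ((p.γ s).1 * p.a2 s - (p.γ s).2.1 * p.a1 s)) := by
    refine ⟨⟨K, k3⟩, ?_⟩
    filter_upwards [p.admissible] with s hs
    have := hasFDerivAt_snd.comp_hasDerivAt s (hasFDerivAt_snd.comp_hasDerivAt s hs)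
    refine this.congr_deriv ?_
    simp
    ring
  refine ⟨_, _, _, _, h1, h2, ?_, ?_, ?_, ?_, ?_, rfl⟩
  · rw [p.start]
  · rw [p.start]
  · rw [p.endpoint]; rfl
  · rw [p.endpoint]; rfl
  · have := h3.integral
    rw [J_cmul, p.start, p.endpoint] at this
    simp only [He] at this
    linarith

theorem prim_of_hasDerivAt {F f : ℝ → ℝ} (h : ∀ s, HasDerivAt F (f s) s) (hf : Continuous f) :
    Prim F f := by
  refine ⟨?_, Eventually.of_forall h⟩
  obtain ⟨C, hC⟩ := isCompact_Icc.exists_bound_of_continuousOn (s := Set.Icc (0:ℝ) 1) hf.continuousOn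
  refine ⟨Real.nnabs C, Convex.lipschitzOnWith_of_nnnorm_hasDerivWithin_le (convex_Icc 0 1)
    (fun x _ => (h x).hasDerivWithinAt) ?_⟩
  intro x hx
  rw [← NNReal.coe_le_coe]
  simpa using (hC x hx).trans (le_abs_self _)

theorem hasDerivAt_poly7 (c1 c2 c3 c4 c5 c6 c7 s : ℝ) :
    HasDerivAt (fun s : ℝ => c1 * s ^ 1 + c2 * s ^ 2 + c3 * s ^ 3 + c4 * s ^ 4 + c5 * s ^ 5 + c6 * s ^ 6
      + c7 * s ^ 7)
      (c1 + 2 * c2 * s + 3 * c3 * s ^ 2 + 4 * c4 * s ^ 3 + 5 * c5 * s ^ 4 + 6 * c6 * s ^ 5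
        + 7 * c7 * s ^ 6) s := by
  have h (n : ℕ) (c : ℝ) := (hasDerivAt_pow n s).const_mul c
  have := (((((h 1 c1).add (h 2 c2)).add (h 3 c3)).add (h 4 c4)).add (h 5 c5)).add (h 6 c6) |>.add
    (h 7 c7)
  refine this.congr_deriv ?_
  norm_num
  ring

theorem exists_path_curve (y1 y2 l m : ℝ) :
    ∃ p : AdmissiblePath ((y1, y2, l * m / 70) : Heis) He, pathLength p ≤ |y1| + |y2| + 70 * |l| + 70 * |m| := by
  have h1 : Prim (fun s => (1 - s) * y1 + l * (s - 3 * s ^ 2 + 2 * s ^ 3))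
      (fun s => - y1 + l * (1 - 6 * s + 6 * s ^ 2)) := by
    refine prim_of_hasDerivAt (fun s => ?_) (by fun_prop)
    have := (hasDerivAt_poly7 (l - y1) (-3 * l) (2 * l) 0 0 0 0 s).const_add y1
    refine (this.congr_deriv (by ring)).congr_of_eventuallyEq (Eventually.of_forall fun t => ?_)
    simp only
    ring
  have h2 : Prim (fun s => (1 - s) * y2 + m * (s - 6 * s ^ 2 + 10 * s ^ 3 - 5 * s ^ 4))
      (fun s => - y2 + m * (1 - 12 * s + 30 * s ^ 2 - 20 * s ^ 3)) := by
    refine prim_of_hasDerivAt (fun s => ?_) (by fun_prop)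
    have := (hasDerivAt_poly7 (m - y2) (-6 * m) (10 * m) (-5 * m) 0 0 0 s).const_add y2
    refine (this.congr_deriv (by ring)).congr_of_eventuallyEq (Eventually.of_forall fun t => ?_)
    simp only
    ring
  have key := exists_path_of_prim h1 h2 (by norm_num) (by norm_num)
  have h3 := (prim_of_hasDerivAt (fun s => hasDerivAt_poly7 (y1 * m - y2 * l)
    (-6 * y1 * m + 3 * y2 * l) (12 * y1 * m - 3 * y2 * l - l * m)
    (-10 * y1 * m + y2 * l + 4 * l * m) (3 * y1 * m - 33 / 5 * l * m) (5 * l * m)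
    (-10 / 7 * l * m) s) (by fun_prop)).integral
  have h4 : ∫ s, (((1 - s) * y1 + l * (s - 3 * s ^ 2 + 2 * s ^ 3)) *
      (- y2 + m * (1 - 12 * s + 30 * s ^ 2 - 20 * s ^ 3)) -
      ((1 - s) * y2 + m * (s - 6 * s ^ 2 + 10 * s ^ 3 - 5 * s ^ 4)) *
      (- y1 + l * (1 - 6 * s + 6 * s ^ 2))) ∂mu01 = - (l * m) / 35 := by
    rw [show -(l * m) / 35 = _ - _ from ?_, ← h3]
    · congr 1
      funext s
      ring
    · norm_num
      ring
  rw [h4] at key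
  have e : ((((1 - 0) * y1 + l * (0 - 3 * 0 ^ 2 + 2 * 0 ^ 3)),
    ((1 - 0) * y2 + m * (0 - 6 * 0 ^ 2 + 10 * 0 ^ 3 - 5 * 0 ^ 4)), -(1/2) * (- (l * m) / 35)) : Heis)
     = (y1, y2, l * m / 70) := by
    ext <;> simp
    ring
  rw [e] at key
  obtain ⟨p, hp⟩ := key
  refine ⟨p, hp.trans_le ?_⟩
  have := J_mono (g := fun _ => |y1| + |y2| + 70 * |l| + 70 * |m|)
    (((h1.bd.pow 2).add (h2.bd.pow 2)).sqrt) (Bd.const _) ?_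
  · simpa using this
  · filter_upwards [ae_Icc] with s hs
    obtain ⟨s0, s1⟩ := hs
    have a1 : |1 - 6 * s + 6 * s ^ 2| ≤ 70 := by
      rw [abs_le]; constructor <;> nlinarith
    have a2 : |1 - 12 * s + 30 * s ^ 2 - 20 * s ^ 3| ≤ 70 := by
      have : s ^ 3 ≤ 1 := pow_le_one₀ s0 s1
      have : 0 ≤ s ^ 3 := by positivity
      rw [abs_le]; constructor <;> nlinarith
    have b1 : |- y1 + l * (1 - 6 * s + 6 * s ^ 2)| ≤ |y1| + |l| * 70 := by
      refine (abs_add_le _ _).trans ?_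
      rw [abs_neg, abs_mul]
      gcongr
    have b2 : |- y2 + m * (1 - 12 * s + 30 * s ^ 2 - 20 * s ^ 3)| ≤ |y2| + |m| * 70 := by
      refine (abs_add_le _ _).trans ?_
      rw [abs_neg, abs_mul]
      gcongr
    refine (Real.sqrt_le_iff.2 ⟨by positivity, ?_⟩ : _ ≤ (|y1| + |l| * 70) + (|y2| + |m| * 70)).trans
      (le_of_eq (by ring))
    have c1 := sq_le_sq' (abs_le.1 b1).1 (abs_le.1 b1).2
    have c2 := sq_le_sq' (abs_le.1 b2).1 (abs_le.1 b2).2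
    have : 0 ≤ (|y1| + |l| * 70) * (|y2| + |m| * 70) := by positivity
    nlinarith

/-- upper bound for the distance -/
theorem exists_path_le (y : Heis) :
    ∃ p : AdmissiblePath y He, pathLength p ≤ |y.1| + |y.2.1| + 1400 * Real.sqrt |y.2.2| := by
  obtain ⟨y1, y2, y3⟩ := y
  have h70 : Real.sqrt 70 ≤ 10 := by
    rw [Real.sqrt_le_left (by norm_num)]; norm_num
  have hp : 0 ≤ Real.sqrt |y3| := Real.sqrt_nonneg _
  have hs : Real.sqrt (70 * |y3|) ≤ 10 * Real.sqrt |y3| := by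
    rw [Real.sqrt_mul (by norm_num)]
    gcongr
  have hsq := Real.mul_self_sqrt (show 0 ≤ 70 * |y3| by positivity)
  have hn := Real.sqrt_nonneg (70 * |y3|)
  rcases le_total 0 y3 with h | h
  · have := exists_path_curve y1 y2 (Real.sqrt (70 * |y3|)) (Real.sqrt (70 * |y3|))
    rw [hsq, abs_of_nonneg hn, show 70 * |y3| / 70 = y3 by rw [abs_of_nonneg h]; ring] at this
    obtain ⟨p, hp⟩ := this
    exact ⟨p, hp.trans (by simp only; linarith)⟩
  · have := exists_path_curve y1 y2 (-Real.sqrt (70 * |y3|)) (Real.sqrt (70 * |y3|))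
    rw [neg_mul, hsq, abs_neg, abs_of_nonneg hn,
      show -(70 * |y3|) / 70 = y3 by rw [abs_of_nonpos h]; ring] at this
    obtain ⟨p, hp⟩ := this
    exact ⟨p, hp.trans (by simp only; linarith)⟩

theorem ccNorm_le (y : Heis) :
    ccNorm y ≤ |y.1| + |y.2.1| + 1400 * Real.sqrt |y.2.2| := by
  obtain ⟨p, hp⟩ := exists_path_le y
  exact (ccNorm_le_pathLength p).trans hp

theorem exists_near (x : Heis) {c : ℝ} (hc : ccNorm x < c) :
    ∃ P1 P2 a1 a2 : ℝ → ℝ, Prim P1 a1 ∧ Prim P2 a2 ∧ P1 0 = x.1 ∧ P2 0 = x.2.1 ∧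
      P1 1 = 0 ∧ P2 1 = 0 ∧ x.2.2 = -(1/2) * ∫ s, (P1 s * a2 s - P2 s * a1 s) ∂mu01 ∧
      ∫ s, Real.sqrt (a1 s ^ 2 + a2 s ^ 2) ∂mu01 < c ∧
      ccNorm x ≤ ∫ s, Real.sqrt (a1 s ^ 2 + a2 s ^ 2) ∂mu01 := by
  obtain ⟨p0, _⟩ := exists_path_le x
  obtain ⟨l, ⟨p, rfl⟩, hl⟩ := exists_lt_of_csInf_lt (s := {l : ℝ | ∃ p : AdmissiblePath x He,
    l = pathLength p}) ⟨_, p0, rfl⟩ hc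
  obtain ⟨P1, P2, a1, a2, h1, h2, h3, h4, h5, h6, h7, h8⟩ := prim_of_path p
  exact ⟨P1, P2, a1, a2, h1, h2, h3, h4, h5, h6, h7, h8 ▸ hl, h8 ▸ ccNorm_le_pathLength p⟩

theorem Prim.mono {F f : ℝ → ℝ} (h : Prim F f) (hf : ∀ᵐ r ∂mu01, 0 ≤ f r) {s t : ℝ}
    (hs : 0 ≤ s) (hst : s ≤ t) (ht : t ≤ 1) : F s ≤ F t := by
  obtain ⟨K, hK⟩ := h.lip
  have hsub : Set.Icc s t ⊆ Set.Icc 0 1 := Set.Icc_subset_Icc hs ht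
  have hac : AbsolutelyContinuousOnInterval F s t :=
    LipschitzOnWith.absolutelyContinuousOnInterval (K := K)
      (by rw [Set.uIcc_of_le hst]; exact hK.mono hsub)
  have h1 := hac.integral_deriv_eq_sub
  rw [intervalIntegral.integral_of_le hst, ← integral_Icc_eq_integral_Ioc] at h1
  have h2 : 0 ≤ ∫ r in Set.Icc s t, deriv F r := by
    apply integral_nonneg_of_ae
    have h3 : ∀ᵐ r ∂mu01, 0 ≤ deriv F r := by
      filter_upwards [h.der, hf] with r hr hr'
      rwa [hr.deriv]
    exact ae_restrict_of_ae_restrict_of_subset hsub h3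
  linarith

/-- arclength data -/
structure Arc (l m : ℝ → ℝ) (L : ℝ) : Prop where
  prim : Prim l m
  nonneg : ∀ s, 0 ≤ m s
  zero : l 0 = 0
  one : l 1 = L
  pos : 0 < L

namespace Arc

variable {l m : ℝ → ℝ} {L : ℝ}

theorem integral (A : Arc l m L) : ∫ s, m s ∂mu01 = L := by
  rw [A.prim.integral, A.zero, A.one, sub_zero]

theorem l_nonneg (A : Arc l m L) {s : ℝ} (h0 : 0 ≤ s) (h1 : s ≤ 1) : 0 ≤ l s := by
  rw [← A.zero]
  exact A.prim.mono (Eventually.of_forall A.nonneg) le_rfl h0 h1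

theorem l_le (A : Arc l m L) {s : ℝ} (h0 : 0 ≤ s) (h1 : s ≤ 1) : l s ≤ L := by
  rw [← A.one]
  exact A.prim.mono (Eventually.of_forall A.nonneg) h0 h1 le_rfl

/-- If `|f| ≤ c m` then `F` varies at most like `c l`. -/
theorem osc (A : Arc l m L) {F f : ℝ → ℝ} (h : Prim F f) {c : ℝ} (hc : 0 ≤ c)
    (hf : ∀ᵐ r ∂mu01, |f r| ≤ c * m r)
    {s t : ℝ} (hs : 0 ≤ s) (hst : s ≤ t) (ht : t ≤ 1) : |F t - F s| ≤ c * L := by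
  have h1 := ((A.prim.cmul c).add h).mono (by
    filter_upwards [hf] with r hr
    linarith [(abs_le.1 hr).1]) hs hst ht
  have h2 := ((A.prim.cmul c).add (h.cmul (-1))).mono (by
    filter_upwards [hf] with r hr
    linarith [(abs_le.1 hr).2]) hs hst ht
  have h3 := mul_le_mul_of_nonneg_left (A.l_le (hs.trans hst) ht) hc
  have h4 := mul_nonneg hc (A.l_nonneg hs (hst.trans ht))
  rw [abs_le]
  constructor <;> linarith

theorem abs_integral_le (A : Arc l m L) {f : ℝ → ℝ} {c : ℝ}
    (hf : ∀ᵐ r ∂mu01, |f r| ≤ c * m r) : |∫ s, f s ∂mu01| ≤ c * L := by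
  have := J_abs_le (A.prim.bd.cmul c) hf
  rwa [J_cmul, A.integral] at this

/-- mean of a function -/
theorem exists_mean (A : Arc l m L) {f f' : ℝ → ℝ} (h : Prim f f')
    (hfL : ∀ s ∈ Set.Icc (0:ℝ) 1, |f s| ≤ L) (hf' : ∀ᵐ r ∂mu01, |f' r| ≤ m r) :
    ∃ M : ℝ, |M| ≤ L ∧ ∫ s, (f s - M) * m s ∂mu01 = 0 ∧
      |f 0 - M| ^ 3 ≤ 5 * ∫ s, (f s - M) ^ 2 * m s ∂mu01 ∧
      |f 1 - M| ^ 3 ≤ 5 * ∫ s, (f s - M) ^ 2 * m s ∂mu01 := by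
  have hL := A.pos
  set M := (∫ s, f s * m s ∂mu01) / L with hM
  have hML : |M| ≤ L := by
    have : |∫ s, f s * m s ∂mu01| ≤ L * L := by
      apply A.abs_integral_le
      filter_upwards [ae_Icc] with s hs
      rw [abs_mul, abs_of_nonneg (A.nonneg s)]
      exact mul_le_mul_of_nonneg_right (hfL s hs) (A.nonneg s)
    rw [hM, abs_div, abs_of_pos hL, div_le_iff₀ hL]
    exact this
  have hn : ∀ s ∈ Set.Icc (0:ℝ) 1, |f s - M| ≤ 2 * L := by
    intro s hs
    have := abs_sub (f s) M
    linarith [hfL s hs]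
  have hz : ∫ s, (f s - M) * m s ∂mu01 = 0 := by
    have e : (fun s => (f s - M) * m s) = fun s => f s * m s - M * m s := by funext s; ring
    rw [e, J_sub (h.bdF.mul A.prim.bd) (A.prim.bd.cmul M), J_cmul, A.integral, hM]
    field_simp
    ring
  have hnP : Prim (fun s => f s + -M) (fun s => f' s + 0) := h.add (Prim.const (-M))
  have hbV : Bd (fun s => 5 * ((f s - M) ^ 2 * m s)) :=
    Bd.cmul _ (((h.bdF.sub (Bd.const M)).pow 2).mul A.prim.bd)
  have bound : ∀ᵐ s ∂mu01, ∀ q : ℝ, 0 ≤ q → q ≤ 1 → ∀ σ : ℝ, |σ| ≤ 1 →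
      |σ * (m s / L) * (f s - M) ^ 3 + q * (3 * (f s - M) ^ 2 * f' s)|
        ≤ 5 * ((f s - M) ^ 2 * m s) := by
    filter_upwards [ae_Icc, hf'] with s hs hf's q q0 q1 σ hσ
    have hm := A.nonneg s
    refine (abs_add_le _ _).trans ?_
    have k1 : |σ * (m s / L) * (f s - M) ^ 3| ≤ 2 * ((f s - M) ^ 2 * m s) := by
      rw [abs_mul, abs_mul, abs_div, abs_of_pos hL, abs_of_nonneg hm, abs_pow]
      have e1 : |f s - M| ^ 3 ≤ 2 * L * (f s - M) ^ 2 := by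
        rw [pow_succ, sq_abs, mul_comm]
        exact mul_le_mul_of_nonneg_right (hn s hs) (sq_nonneg _)
      calc |σ| * (m s / L) * |f s - M| ^ 3 ≤ 1 * (m s / L) * (2 * L * (f s - M) ^ 2) := by
            gcongr
        _ = 2 * ((f s - M) ^ 2 * m s) := by field_simp
    have k2 : |q * (3 * (f s - M) ^ 2 * f' s)| ≤ 3 * ((f s - M) ^ 2 * m s) := by
      rw [abs_mul, abs_mul, abs_of_nonneg q0, abs_of_nonneg (by positivity : 0 ≤ 3 * (f s - M) ^ 2)]
      calc q * (3 * (f s - M) ^ 2 * |f' s|) ≤ 1 * (3 * (f s - M) ^ 2 * m s) := by gcongr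
        _ = _ := by ring
    linarith
  have hn3 := hnP.mul (hnP.mul hnP)
  refine ⟨M, hML, hz, ?_, ?_⟩
  · have hq : Prim (fun s => 1 + (-1/L) * l s) (fun s => 0 + (-1/L) * m s) :=
      (Prim.const 1).add (A.prim.cmul _)
    have hI := (hq.mul hn3).integral
    simp only [A.zero, A.one] at hI
    have e : (1 + -1 / L * L) = 0 := by field_simp; ring
    rw [e] at hI
    have hab := J_abs_le (f := fun s => (0 + -1 / L * m s) * ((f s + -M) * ((f s + -M) * (f s + -M))) +
      (1 + -1 / L * l s) *
      ((f' s + 0) * ((f s + -M) * (f s + -M)) + (f s + -M) * ((f' s + 0) * (f s + -M) + (f s + -M) * (f' s + 0)))) hbV (by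
        filter_upwards [bound, ae_Icc] with s hb hs
        have := hb (1 + -1 / L * l s) (by
          have := A.l_le hs.1 hs.2
          have : l s / L ≤ 1 := (div_le_one hL).2 this
          have e2 : 1 + -1 / L * l s = 1 - l s / L := by ring
          linarith) (by
          have := A.l_nonneg hs.1 hs.2
          have : 0 ≤ l s / L := by positivity
          have e2 : 1 + -1 / L * l s = 1 - l s / L := by ring
          linarith) (-1) (by norm_num)
        refine le_trans (le_of_eq ?_) this
        congr 1
        ring)
    rw [hI, J_cmul] at hab
    refine le_trans (le_of_eq ?_) hab
    rw [← abs_pow, ← abs_neg]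
    congr 1
    ring
  · have hq : Prim (fun s => (1/L) * l s) (fun s => (1/L) * m s) := A.prim.cmul _
    have hI := (hq.mul hn3).integral
    simp only [A.zero, A.one] at hI
    have e : (1 / L * L) = 1 := by field_simp
    rw [e] at hI
    have hab := J_abs_le (f := fun s => (1 / L * m s) * ((f s + -M) * ((f s + -M) * (f s + -M))) +
      (1 / L * l s) *
      ((f' s + 0) * ((f s + -M) * (f s + -M)) + (f s + -M) * ((f' s + 0) * (f s + -M) + (f s + -M) * (f' s + 0)))) hbV (by
        filter_upwards [bound, ae_Icc] with s hb hs
        have := hb (1 / L * l s) (by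
          have := A.l_nonneg hs.1 hs.2
          positivity) (by
          have := A.l_le hs.1 hs.2
          have : l s / L ≤ 1 := (div_le_one hL).2 this
          have e2 : 1 / L * l s = l s / L := by ring
          linarith) 1 (by norm_num)
        refine le_trans (le_of_eq ?_) this
        congr 1
        ring)
    rw [hI, J_cmul] at hab
    refine le_trans (le_of_eq ?_) hab
    rw [← abs_pow]
    congr 1
    ring

end Arc

theorem sqrt_var_le (a1 a2 r1 r2 : ℝ) :
    Real.sqrt ((a1 + Real.sqrt (a1 ^ 2 + a2 ^ 2) * r1) ^ 2 + (a2 + Real.sqrt (a1 ^ 2 + a2 ^ 2) * r2) ^ 2)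
      ≤ Real.sqrt (a1 ^ 2 + a2 ^ 2) + (a1 * r1 + a2 * r2)
        + Real.sqrt (a1 ^ 2 + a2 ^ 2) * ((r1 ^ 2 + r2 ^ 2) / 2) := by
  set m := Real.sqrt (a1 ^ 2 + a2 ^ 2) with hm
  have m0 : 0 ≤ m := Real.sqrt_nonneg _
  have hmm : m ^ 2 = a1 ^ 2 + a2 ^ 2 := Real.sq_sqrt (by positivity)
  have hX : -(m * ((r1 ^ 2 + r2 ^ 2 + 1) / 2)) ≤ a1 * r1 + a2 * r2 := by
    have h1 : -(m * Real.sqrt (r1 ^ 2 + r2 ^ 2)) ≤ a1 * r1 + a2 * r2 := by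
      have : |a1 * r1 + a2 * r2| ≤ m * Real.sqrt (r1 ^ 2 + r2 ^ 2) := by
        rw [hm, ← Real.sqrt_mul (by positivity)]
        apply Real.abs_le_sqrt
        nlinarith [sq_nonneg (a1 * r2 - a2 * r1)]
      linarith [(abs_le.1 this).1]
    have h2 : Real.sqrt (r1 ^ 2 + r2 ^ 2) ≤ (r1 ^ 2 + r2 ^ 2 + 1) / 2 := by
      have := Real.sq_sqrt (show 0 ≤ r1 ^ 2 + r2 ^ 2 by positivity)
      nlinarith [sq_nonneg (Real.sqrt (r1 ^ 2 + r2 ^ 2) - 1)]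
    have := mul_le_mul_of_nonneg_left h2 m0
    linarith
  rw [Real.sqrt_le_iff]
  constructor
  · nlinarith
  · set Y := (a1 * r1 + a2 * r2) + m * ((r1 ^ 2 + r2 ^ 2) / 2) with hY
    have e : (a1 + m * r1) ^ 2 + (a2 + m * r2) ^ 2 = m ^ 2 + 2 * m * Y := by
      rw [hY]
      linear_combination (-1) * hmm
    rw [e]
    nlinarith [sq_nonneg Y]

theorem var_pt {L w1 w2 τ v1 v2 n : ℝ} (hL : 0 < L) (hn : |n| ≤ 2 * L)
    (hvv : v1 ^ 2 + v2 ^ 2 ≤ 1) :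
    ((-1/L * w1 + τ * v1 * n) ^ 2 + (-1/L * w2 + τ * v2 * n) ^ 2) / 2
        ≤ (w1 ^ 2 + w2 ^ 2) / L ^ 2 + 4 * L ^ 2 * τ ^ 2 := by
  have e3 : (w1 ^ 2 + w2 ^ 2) / L ^ 2 = (-1/L * w1) ^ 2 + (-1/L * w2) ^ 2 := by
    field_simp
  rw [e3]
  have k1 : n ^ 2 ≤ (2 * L) ^ 2 := sq_le_sq' (abs_le.1 hn).1 (abs_le.1 hn).2
  have k2 : (τ * v1 * n) ^ 2 + (τ * v2 * n) ^ 2 ≤ 4 * L ^ 2 * τ ^ 2 := by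
    have k3 : (v1 ^ 2 + v2 ^ 2) * n ^ 2 ≤ 1 * (2 * L) ^ 2 :=
      mul_le_mul hvv k1 (sq_nonneg _) zero_le_one
    have := mul_le_mul_of_nonneg_left k3 (sq_nonneg τ)
    linarith
  nlinarith [sq_nonneg (-1/L * w1 - τ * v1 * n), sq_nonneg (-1/L * w2 - τ * v2 * n)]

theorem var_fin {m a1 a2 L w1 w2 τ v1 v2 n R : ℝ}
    (hr2 : m * (((-1/L * w1 + τ * v1 * n) ^ 2 + (-1/L * w2 + τ * v2 * n) ^ 2) / 2) ≤ m * R) :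
    m + (a1 * (-1/L * w1 + τ * v1 * n) + a2 * (-1/L * w2 + τ * v2 * n)) +
      m * (((-1/L * w1 + τ * v1 * n) ^ 2 + (-1/L * w2 + τ * v2 * n) ^ 2) / 2) ≤
    (1 + R) * m + ((-1/L * w1) * a1 + ((-1/L * w2) * a2 + τ * ((v1 * a1 + v2 * a2) * n))) := by
  linarith

theorem var_e {a w L m τ v n : ℝ} : a + (w * (0 + (-1/L) * m) + (τ * v) * (n * m))
      = a + m * (-1/L * w + τ * v * n) := by ring

/-- A curve from `x` to the identity, in planar form. -/
structure Crv (x : Heis) (P1 P2 a1 a2 : ℝ → ℝ) : Prop where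
  h1 : Prim P1 a1
  h2 : Prim P2 a2
  s1 : P1 0 = x.1
  s2 : P2 0 = x.2.1
  e1 : P1 1 = 0
  e2 : P2 1 = 0
  z : x.2.2 = -(1/2) * ∫ s, (P1 s * a2 s - P2 s * a1 s) ∂mu01

namespace Crv

variable {x : Heis} {P1 P2 a1 a2 : ℝ → ℝ}

theorem abs_le1 (s : ℝ) : |a1 s| ≤ Real.sqrt (a1 s ^ 2 + a2 s ^ 2) :=
  Real.abs_le_sqrt (by nlinarith [sq_nonneg (a2 s)])

theorem abs_le2 (s : ℝ) : |a2 s| ≤ Real.sqrt (a1 s ^ 2 + a2 s ^ 2) :=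
  Real.abs_le_sqrt (by nlinarith [sq_nonneg (a1 s)])

theorem exists_arc (C : Crv x P1 P2 a1 a2)
    (hL : 0 < ∫ s, Real.sqrt (a1 s ^ 2 + a2 s ^ 2) ∂mu01) :
    ∃ l, Arc l (fun s => Real.sqrt (a1 s ^ 2 + a2 s ^ 2))
      (∫ s, Real.sqrt (a1 s ^ 2 + a2 s ^ 2) ∂mu01) := by
  have hb : Bd (fun s => Real.sqrt (a1 s ^ 2 + a2 s ^ 2)) :=
    ((C.h1.bd.pow 2).add (C.h2.bd.pow 2)).sqrt
  refine ⟨_, Prim.of_bd hb, fun s => Real.sqrt_nonneg _, by simp, ?_, hL⟩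
  have := (Prim.of_bd hb).integral
  simp only [intervalIntegral.integral_same, sub_zero] at this
  exact this.symm

theorem P1_le (C : Crv x P1 P2 a1 a2) {l : ℝ → ℝ} {L : ℝ}
    (A : Arc l (fun s => Real.sqrt (a1 s ^ 2 + a2 s ^ 2)) L) :
    ∀ s ∈ Set.Icc (0:ℝ) 1, |P1 s| ≤ L := by
  intro s hs
  have := A.osc C.h1 zero_le_one (Eventually.of_forall fun s => by
    rw [one_mul]; exact abs_le1 s) hs.1 hs.2 le_rfl
  rw [C.e1, zero_sub, abs_neg, one_mul] at this
  exact this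

theorem P2_le (C : Crv x P1 P2 a1 a2) {l : ℝ → ℝ} {L : ℝ}
    (A : Arc l (fun s => Real.sqrt (a1 s ^ 2 + a2 s ^ 2)) L) :
    ∀ s ∈ Set.Icc (0:ℝ) 1, |P2 s| ≤ L := by
  intro s hs
  have := A.osc C.h2 zero_le_one (Eventually.of_forall fun s => by
    rw [one_mul]; exact abs_le2 s) hs.1 hs.2 le_rfl
  rw [C.e2, zero_sub, abs_neg, one_mul] at this
  exact this

theorem x3_le (C : Crv x P1 P2 a1 a2) {l : ℝ → ℝ} {L : ℝ}
    (A : Arc l (fun s => Real.sqrt (a1 s ^ 2 + a2 s ^ 2)) L) : |x.2.2| ≤ L ^ 2 := by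
  have : |∫ s, (P1 s * a2 s - P2 s * a1 s) ∂mu01| ≤ (2 * L) * L := by
    apply A.abs_integral_le
    filter_upwards [ae_Icc] with s hs
    have k1 : |P1 s * a2 s| ≤ L * Real.sqrt (a1 s ^ 2 + a2 s ^ 2) := by
      rw [abs_mul]
      exact mul_le_mul (C.P1_le A s hs) (abs_le2 s) (abs_nonneg _) A.pos.le
    have k2 : |P2 s * a1 s| ≤ L * Real.sqrt (a1 s ^ 2 + a2 s ^ 2) := by
      rw [abs_mul]
      exact mul_le_mul (C.P2_le A s hs) (abs_le1 s) (abs_nonneg _) A.pos.le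
    have := abs_sub (P1 s * a2 s) (P2 s * a1 s)
    linarith
  rw [C.z, abs_mul]
  norm_num
  nlinarith

set_option maxHeartbeats 4000000 in
/-- exact variation of a curve -/
theorem variation (C : Crv x P1 P2 a1 a2) {l : ℝ → ℝ} {L : ℝ}
    (A : Arc l (fun s => Real.sqrt (a1 s ^ 2 + a2 s ^ 2)) L) {v1 v2 M : ℝ}
    (hv : |v1| + |v2| ≤ 1) (hM : |M| ≤ L)
    (hmean : ∫ s, ((v1 * P2 s - v2 * P1 s) - M) * Real.sqrt (a1 s ^ 2 + a2 s ^ 2) ∂mu01 = 0)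
    {V : ℝ} (hV : ∫ s, ((v1 * P2 s - v2 * P1 s) - M) ^ 2 * Real.sqrt (a1 s ^ 2 + a2 s ^ 2) ∂mu01 = V) :
    ∃ A1 A2 D1 D2 α1 α2 α3 : ℝ, |A1| ≤ L ∧ |A2| ≤ L ∧ |D1| ≤ 2 * L ^ 2 ∧ |D2| ≤ 2 * L ^ 2 ∧
      |α3| ≤ 2 * L ^ 2 ∧ ∀ w1 w2 τ : ℝ,
      ccNorm ((x.1 + w1, x.2.1 + w2,
        x.2.2 + (A1 * w1 + A2 * w2) + τ * (V + (D1 * w1 + D2 * w2))) : Heis)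
      ≤ L + (α1 * w1 + α2 * w2 + α3 * τ) + (w1 ^ 2 + w2 ^ 2) / L + 4 * L ^ 3 * τ ^ 2 := by
  have hL := A.pos
  set m : ℝ → ℝ := fun s => Real.sqrt (a1 s ^ 2 + a2 s ^ 2) with hm
  set f : ℝ → ℝ := fun s => v1 * P2 s + (-v2) * P1 s with hf
  set f' : ℝ → ℝ := fun s => v1 * a2 s + (-v2) * a1 s with hf'
  have hfP : Prim f f' := (C.h2.cmul v1).add (C.h1.cmul (-v2))
  have hm0 : ∀ s, 0 ≤ m s := A.nonneg
  have ha1 : ∀ s, |a1 s| ≤ m s := fun s => abs_le1 s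
  have ha2 : ∀ s, |a2 s| ≤ m s := fun s => abs_le2 s
  have hf'm : ∀ s, |f' s| ≤ m s := by
    intro s
    refine (abs_add_le _ _).trans ?_
    rw [abs_mul, abs_mul, abs_neg]
    nlinarith [ha1 s, ha2 s, abs_nonneg v1, abs_nonneg v2, hm0 s]
  have hfL : ∀ s ∈ Set.Icc (0:ℝ) 1, |f s| ≤ L := by
    intro s hs
    refine (abs_add_le _ _).trans ?_
    rw [abs_mul, abs_mul, abs_neg]
    nlinarith [C.P1_le A s hs, C.P2_le A s hs, abs_nonneg v1, abs_nonneg v2]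
  set n : ℝ → ℝ := fun s => f s - M with hn
  have hnL : ∀ s ∈ Set.Icc (0:ℝ) 1, |n s| ≤ 2 * L := by
    intro s hs
    have := abs_sub (f s) M
    simp only [hn]
    linarith [hfL s hs]
  have hnB : Bd n := hfP.bdF.sub (Bd.const M)
  have hmB : Bd m := A.prim.bd
  have hnmB : Bd (fun s => n s * m s) := hnB.mul hmB
  obtain ⟨N, hN, N0⟩ : ∃ N, Prim N (fun s => n s * m s) ∧ N 0 = 0 :=
    ⟨_, Prim.of_bd hnmB, by simp⟩
  have hmean' : ∫ s, n s * m s ∂mu01 = 0 := by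
    rw [← hmean]; congr 1; funext s; simp only [hn, hf]; ring
  have hV' : ∫ s, n s ^ 2 * m s ∂mu01 = V := by
    rw [← hV]; congr 1; funext s; simp only [hn, hf]; ring
  have N1 : N 1 = 0 := by
    have := hN.integral
    rw [hmean', N0] at this
    linarith
  have hnm : ∀ s ∈ Set.Icc (0:ℝ) 1, |n s * m s| ≤ 2 * L * m s := by
    intro s hs
    rw [abs_mul, abs_of_nonneg (hm0 s)]
    exact mul_le_mul_of_nonneg_right (hnL s hs) (hm0 s)
  have hNL : ∀ s ∈ Set.Icc (0:ℝ) 1, |N s| ≤ 2 * L ^ 2 := by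
    intro s hs
    have := A.osc hN (c := 2 * L) (by positivity) (by
      filter_upwards [ae_Icc] with r hr using hnm r hr) le_rfl hs.1 hs.2
    rw [N0, sub_zero] at this
    linarith
  set q : ℝ → ℝ := fun s => 1 + (-1/L) * l s with hq
  set q' : ℝ → ℝ := fun s => 0 + (-1/L) * m s with hq'
  have hqP : Prim q q' := (Prim.const 1).add (A.prim.cmul _)
  have q0 : q 0 = 1 := by simp [hq, A.zero]
  have q1 : q 1 = 0 := by simp only [hq, A.one]; field_simp; ring
  have hqL : ∀ s ∈ Set.Icc (0:ℝ) 1, |q s| ≤ 1 := by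
    intro s hs
    have k1 := A.l_le hs.1 hs.2
    have k2 := A.l_nonneg hs.1 hs.2
    have k3 : l s / L ≤ 1 := (div_le_one hL).2 k1
    have k4 : 0 ≤ l s / L := by positivity
    have e2 : q s = 1 - l s / L := by simp only [hq]; ring
    rw [e2, abs_le]; constructor <;> linarith
  have hq'L : ∀ s, |q' s| = m s / L := by
    intro s
    have e2 : q' s = -(m s / L) := by simp only [hq']; ring
    rw [e2, abs_neg, abs_of_nonneg (div_nonneg (hm0 s) hL.le)]
  -- the integrands
  set K0 : ℝ → ℝ := fun s => P1 s * a2 s - P2 s * a1 s with hK0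
  set K1 : ℝ → ℝ := fun s => q s * a2 s - P2 s * q' s with hK1
  set K2 : ℝ → ℝ := fun s => P1 s * q' s - q s * a1 s with hK2
  set K3 : ℝ → ℝ := fun s => N s * f' s - f s * (n s * m s) with hK3
  set K4 : ℝ → ℝ := fun s => q s * (n s * m s) - N s * q' s with hK4
  have B0 : Bd K0 := (C.h1.bdF.mul C.h2.bd).sub (C.h2.bdF.mul C.h1.bd)
  have B1 : Bd K1 := (hqP.bdF.mul C.h2.bd).sub (C.h2.bdF.mul hqP.bd)
  have B2 : Bd K2 := (C.h1.bdF.mul hqP.bd).sub (hqP.bdF.mul C.h1.bd)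
  have B3 : Bd K3 := (hN.bdF.mul hfP.bd).sub (hfP.bdF.mul hnmB)
  have B4 : Bd K4 := (hqP.bdF.mul hnmB).sub (hN.bdF.mul hqP.bd)
  have I1 : |∫ s, K1 s ∂mu01| ≤ 2 * L := by
    apply A.abs_integral_le
    filter_upwards [ae_Icc] with s hs
    refine (abs_sub _ _).trans ?_
    rw [abs_mul, abs_mul, hq'L]
    have k1 : |q s| * |a2 s| ≤ 1 * m s := mul_le_mul (hqL s hs) (ha2 s) (abs_nonneg _) zero_le_one
    have k2 : |P2 s| * (m s / L) ≤ L * (m s / L) :=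
      mul_le_mul_of_nonneg_right (C.P2_le A s hs) (div_nonneg (hm0 s) hL.le)
    have k3 : L * (m s / L) = m s := by field_simp
    change _ ≤ 2 * m s
    linarith
  have I2 : |∫ s, K2 s ∂mu01| ≤ 2 * L := by
    apply A.abs_integral_le
    filter_upwards [ae_Icc] with s hs
    refine (abs_sub _ _).trans ?_
    rw [abs_mul, abs_mul, hq'L]
    have k1 : |q s| * |a1 s| ≤ 1 * m s := mul_le_mul (hqL s hs) (ha1 s) (abs_nonneg _) zero_le_one
    have k2 : |P1 s| * (m s / L) ≤ L * (m s / L) :=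
      mul_le_mul_of_nonneg_right (C.P1_le A s hs) (div_nonneg (hm0 s) hL.le)
    have k3 : L * (m s / L) = m s := by field_simp
    change _ ≤ 2 * m s
    linarith
  have I3 : ∫ s, K3 s ∂mu01 = - 2 * V := by
    have e1 := (hN.mul hfP).integral
    simp only [N0, N1, zero_mul, sub_zero] at e1
    have e2 : ∫ s, f s * (n s * m s) ∂mu01 = V := by
      have e3 : (fun s => f s * (n s * m s)) = fun s => n s ^ 2 * m s + M * (n s * m s) := by
        funext s; simp only [hn]; ring
      rw [e3, J_add ((hnB.pow 2).mul hmB) (hnmB.cmul M), J_cmul, hmean', hV']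
      ring
    have e4 : K3 = fun s => (n s * m s * f s + N s * f' s) - 2 * (f s * (n s * m s)) := by
      funext s; simp only [hK3]; ring
    rw [e4, J_sub ((hN.mul hfP).bd) ((hfP.bdF.mul hnmB).cmul 2), J_cmul, e1, e2]
    ring
  have I4 : |∫ s, K4 s ∂mu01| ≤ 4 * L * L := by
    apply A.abs_integral_le
    filter_upwards [ae_Icc] with s hs
    refine (abs_sub _ _).trans ?_
    rw [abs_mul, abs_mul (N s), hq'L]
    have k1 : |q s| * |n s * m s| ≤ 1 * (2 * L * m s) :=
      mul_le_mul (hqL s hs) (hnm s hs) (abs_nonneg _) zero_le_one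
    have k2 : |N s| * (m s / L) ≤ 2 * L ^ 2 * (m s / L) :=
      mul_le_mul_of_nonneg_right (hNL s hs) (div_nonneg (hm0 s) hL.le)
    have k3 : 2 * L ^ 2 * (m s / L) = 2 * L * m s := by field_simp
    change _ ≤ 4 * L * m s
    linarith
  have hv1 : |v1| ≤ 1 := by linarith [abs_nonneg v2]
  have hv2 : |v2| ≤ 1 := by linarith [abs_nonneg v1]
  have hvv : v1 ^ 2 + v2 ^ 2 ≤ 1 := by
    rw [← sq_abs v1, ← sq_abs v2]
    nlinarith [abs_nonneg v1, abs_nonneg v2]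
  set g : ℝ → ℝ := fun s => (v1 * a1 s + v2 * a2 s) * n s with hg
  have hgB : Bd g := ((C.h1.bd.cmul v1).add (C.h2.bd.cmul v2)).mul hnB
  have I5 : |∫ s, g s ∂mu01| ≤ 2 * L * L := by
    apply A.abs_integral_le
    filter_upwards [ae_Icc] with s hs
    have k1 : |v1 * a1 s + v2 * a2 s| ≤ m s := by
      refine (abs_add_le _ _).trans ?_
      rw [abs_mul, abs_mul]
      nlinarith [ha1 s, ha2 s, abs_nonneg v1, abs_nonneg v2, hm0 s]
    simp only [hg]
    rw [abs_mul, mul_comm]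
    exact mul_le_mul (hnL s hs) k1 (abs_nonneg _) (by positivity)
  refine ⟨-(1/2) * ∫ s, K1 s ∂mu01, -(1/2) * ∫ s, K2 s ∂mu01, -(1/2) * v2 * ∫ s, K4 s ∂mu01,
    (1/2) * v1 * ∫ s, K4 s ∂mu01, (-1/L) * ∫ s, a1 s ∂mu01, (-1/L) * ∫ s, a2 s ∂mu01,
    ∫ s, g s ∂mu01, ?_, ?_, ?_, ?_, ?_, ?_⟩
  · rw [abs_mul]; norm_num; linarith
  · rw [abs_mul]; norm_num; linarith
  · rw [abs_mul, abs_mul]; norm_num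
    nlinarith [abs_nonneg v2, abs_nonneg (∫ s, K4 s ∂mu01)]
  · rw [abs_mul, abs_mul]; norm_num
    nlinarith [abs_nonneg v1, abs_nonneg (∫ s, K4 s ∂mu01)]
  · linarith
  intro w1 w2 τ
  have g1 : Prim (fun s => P1 s + (w1 * q s + (τ * v1) * N s))
      (fun s => a1 s + (w1 * q' s + (τ * v1) * (n s * m s))) :=
    C.h1.add ((hqP.cmul w1).add (hN.cmul (τ * v1)))
  have g2 : Prim (fun s => P2 s + (w2 * q s + (τ * v2) * N s))
      (fun s => a2 s + (w2 * q' s + (τ * v2) * (n s * m s))) :=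
    C.h2.add ((hqP.cmul w2).add (hN.cmul (τ * v2)))
  have key := ccNorm_le_of_prim g1 g2 (by simp only [C.e1, q1, N1]; ring)
    (by simp only [C.e2, q1, N1]; ring)
  have hIntg : ∫ s, ((P1 s + (w1 * q s + (τ * v1) * N s)) * (a2 s + (w2 * q' s + (τ * v2) * (n s * m s)))
      - (P2 s + (w2 * q s + (τ * v2) * N s)) * (a1 s + (w1 * q' s + (τ * v1) * (n s * m s)))) ∂mu01
      = ∫ s, K0 s ∂mu01 + (w1 * ∫ s, K1 s ∂mu01 + (w2 * ∫ s, K2 s ∂mu01 + (τ * ∫ s, K3 s ∂mu01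
        + (τ * (w1 * v2 - w2 * v1)) * ∫ s, K4 s ∂mu01))) := by
    rw [← J_cmul, ← J_cmul, ← J_cmul, ← J_cmul, ← J_add (B3.cmul _) (B4.cmul _),
      ← J_add (B2.cmul _) ((B3.cmul _).add (B4.cmul _)),
      ← J_add (B1.cmul _) ((B2.cmul _).add ((B3.cmul _).add (B4.cmul _))),
      ← J_add B0 ((B1.cmul _).add ((B2.cmul _).add ((B3.cmul _).add (B4.cmul _))))]
    congr 1
    funext s
    simp only [hK0, hK1, hK2, hK3, hK4, hf, hf']
    ring
  rw [hIntg] at key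
  have ept : (((P1 0 + (w1 * q 0 + (τ * v1) * N 0)), (P2 0 + (w2 * q 0 + (τ * v2) * N 0)),
      -(1/2) * (∫ s, K0 s ∂mu01 + (w1 * ∫ s, K1 s ∂mu01 + (w2 * ∫ s, K2 s ∂mu01 + (τ * ∫ s, K3 s ∂mu01
        + (τ * (w1 * v2 - w2 * v1)) * ∫ s, K4 s ∂mu01))))) : Heis) =
      (x.1 + w1, x.2.1 + w2,
        x.2.2 + ((-(1/2) * ∫ s, K1 s ∂mu01) * w1 + (-(1/2) * ∫ s, K2 s ∂mu01) * w2) +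
          τ * (V + ((-(1/2) * v2 * ∫ s, K4 s ∂mu01) * w1 + ((1/2) * v1 * ∫ s, K4 s ∂mu01) * w2))) := by
    have hz : -(1/2) * ∫ s, K0 s ∂mu01 = x.2.2 := C.z.symm
    refine Prod.ext ?_ (Prod.ext ?_ ?_)
    · simp [C.s1, q0, N0]
    · simp [C.s2, q0, N0]
    · simp only
      rw [I3, ← hz]
      ring
  rw [ept] at key
  refine key.trans ?_
  have hbound : ∀ᵐ s ∂mu01, Real.sqrt ((a1 s + (w1 * q' s + (τ * v1) * (n s * m s))) ^ 2
      + (a2 s + (w2 * q' s + (τ * v2) * (n s * m s))) ^ 2)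
      ≤ (1 + ((w1 ^ 2 + w2 ^ 2) / L ^ 2 + 4 * L ^ 2 * τ ^ 2)) * m s +
        ((-1/L * w1) * a1 s + ((-1/L * w2) * a2 s + τ * g s)) := by
    filter_upwards [ae_Icc] with s hs
    have := sqrt_var_le (a1 s) (a2 s) (-1/L * w1 + τ * v1 * n s) (-1/L * w2 + τ * v2 * n s)
    have e1 : a1 s + (w1 * q' s + (τ * v1) * (n s * m s))
      = a1 s + Real.sqrt (a1 s ^ 2 + a2 s ^ 2) * (-1/L * w1 + τ * v1 * n s) := by
      exact var_e
    have e2 : a2 s + (w2 * q' s + (τ * v2) * (n s * m s))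
      = a2 s + Real.sqrt (a1 s ^ 2 + a2 s ^ 2) * (-1/L * w2 + τ * v2 * n s) := by
      exact var_e
    rw [e1, e2]
    refine this.trans ?_
    have hms : Real.sqrt (a1 s ^ 2 + a2 s ^ 2) = m s := rfl
    rw [hms]
    have hr := var_pt (w1 := w1) (w2 := w2) (τ := τ) hL (hnL s hs) hvv
    have hr2 := mul_le_mul_of_nonneg_left hr (hm0 s)
    exact var_fin hr2
  have hfin := J_mono ((g1.bd.pow 2).add (g2.bd.pow 2)).sqrt
    ((hmB.cmul _).add ((C.h1.bd.cmul _).add ((C.h2.bd.cmul _).add (hgB.cmul _)))) hbound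
  rw [J_add (hmB.cmul _) ((C.h1.bd.cmul _).add ((C.h2.bd.cmul _).add (hgB.cmul _))),
    J_add (C.h1.bd.cmul _) ((C.h2.bd.cmul _).add (hgB.cmul _)),
    J_add (C.h2.bd.cmul _) (hgB.cmul _), J_cmul, J_cmul, J_cmul, J_cmul, A.integral] at hfin
  refine hfin.trans (le_of_eq ?_)
  field_simp
  ring

end Crv

namespace Crv

variable {x : Heis} {P1 P2 a1 a2 : ℝ → ℝ}

theorem exists_mean (C : Crv x P1 P2 a1 a2) {l : ℝ → ℝ} {L : ℝ}
    (A : Arc l (fun s => Real.sqrt (a1 s ^ 2 + a2 s ^ 2)) L) {v1 v2 : ℝ}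
    (hv : |v1| + |v2| ≤ 1) : ∃ M, |M| ≤ L ∧
    ∫ s, ((v1 * P2 s - v2 * P1 s) - M) * Real.sqrt (a1 s ^ 2 + a2 s ^ 2) ∂mu01 = 0 ∧
    |(v1 * x.2.1 - v2 * x.1) - M| ^ 3 ≤
      5 * ∫ s, ((v1 * P2 s - v2 * P1 s) - M) ^ 2 * Real.sqrt (a1 s ^ 2 + a2 s ^ 2) ∂mu01 ∧
    |M| ^ 3 ≤
      5 * ∫ s, ((v1 * P2 s - v2 * P1 s) - M) ^ 2 * Real.sqrt (a1 s ^ 2 + a2 s ^ 2) ∂mu01 := by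
  have hfP : Prim (fun s => v1 * P2 s + (-v2) * P1 s) (fun s => v1 * a2 s + (-v2) * a1 s) :=
    (C.h2.cmul v1).add (C.h1.cmul (-v2))
  have hfe : (fun s => v1 * P2 s + (-v2) * P1 s) = fun s => v1 * P2 s - v2 * P1 s := by
    funext s; ring
  rw [hfe] at hfP
  obtain ⟨M, hM, h0, h1, h2⟩ := A.exists_mean hfP (by
    intro s hs
    refine (abs_sub _ _).trans ?_
    rw [abs_mul, abs_mul]
    nlinarith [C.P1_le A s hs, C.P2_le A s hs, abs_nonneg v1, abs_nonneg v2, A.pos]) (by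
    refine Eventually.of_forall fun s => ?_
    refine (abs_add_le _ _).trans ?_
    rw [abs_mul, abs_mul, abs_neg]
    have k1 : |a1 s| ≤ Real.sqrt (a1 s ^ 2 + a2 s ^ 2) := abs_le1 s
    have k2 : |a2 s| ≤ Real.sqrt (a1 s ^ 2 + a2 s ^ 2) := abs_le2 s
    nlinarith [abs_nonneg v1, abs_nonneg v2, Real.sqrt_nonneg (a1 s ^ 2 + a2 s ^ 2)])
  refine ⟨M, hM, h0, ?_, ?_⟩
  · simpa only [C.s1, C.s2] using h1
  · simpa only [C.e1, C.e2, mul_zero, sub_zero, zero_sub, abs_neg] using h2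

/-- small variance gives small mass -/
theorem small_mass {l P b n m : ℝ → ℝ} {L δ M V : ℝ} (A : Arc l m L) (hδ : 0 < δ)
    (hbm : ∀ s, |b s| ≤ m s) (hM : |M| ≤ δ * L)
    (hn : ∀ s, |P s| ≤ |n s| + |M|) (hnB : Bd n)
    (hV : ∫ s, n s ^ 2 * m s ∂mu01 = V) (hVs : V ≤ δ ^ 2 * L ^ 3) :
    |∫ s, P s * b s ∂mu01| ≤ 2 * δ * L ^ 2 := by
  have hL := A.pos
  have hB := A.prim.bd
  have := J_abs_le (f := fun s => P s * b s)
    (g := fun s => (1 / (2 * (δ * L))) * (n s ^ 2 * m s) + (3 / 2 * (δ * L)) * m s)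
    (((hnB.pow 2).mul hB).cmul _ |>.add (hB.cmul _)) (Eventually.of_forall fun s => by
      have m0 := A.nonneg s
      have hd : 0 < δ * L := by positivity
      have k1 : |n s| ≤ 1 / (2 * (δ * L)) * n s ^ 2 + (δ * L) / 2 := by
        rw [← sq_abs (n s)]
        have : 1 / (2 * (δ * L)) * |n s| ^ 2 + (δ * L) / 2 - |n s|
          = (|n s| - δ * L) ^ 2 / (2 * (δ * L)) := by field_simp; ring
        have h2 : 0 ≤ (|n s| - δ * L) ^ 2 / (2 * (δ * L)) := by positivity
        linarith
      have k2 : |P s| ≤ 1 / (2 * (δ * L)) * n s ^ 2 + 3 / 2 * (δ * L) := by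
        linarith [hn s]
      rw [abs_mul]
      have k3 : |P s| * |b s| ≤ (1 / (2 * (δ * L)) * n s ^ 2 + 3 / 2 * (δ * L)) * m s :=
        mul_le_mul k2 (hbm s) (abs_nonneg _) (by positivity)
      linarith)
  refine this.trans ?_
  rw [J_add (((hnB.pow 2).mul hB).cmul _) (hB.cmul _), J_cmul, J_cmul, hV, A.integral]
  have : 1 / (2 * (δ * L)) * V ≤ 1 / (2 * (δ * L)) * (δ ^ 2 * L ^ 3) :=
    mul_le_mul_of_nonneg_left hVs (by positivity)
  have e : 1 / (2 * (δ * L)) * (δ ^ 2 * L ^ 3) = δ * L ^ 2 / 2 := by field_simp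
  rw [e] at this
  nlinarith

theorem lt_of_cube {a b : ℝ} (hb : 0 ≤ b) (h : a ^ 3 ≤ b ^ 3) : a ≤ b := by
  by_contra hc
  push Not at hc
  have := pow_lt_pow_left₀ hc hb (n := 3) (by norm_num)
  linarith

theorem exists_dir (C : Crv x P1 P2 a1 a2) {l : ℝ → ℝ} {L : ℝ}
    (A : Arc l (fun s => Real.sqrt (a1 s ^ 2 + a2 s ^ 2)) L) (hx : L ≤ 2 * ccNorm x) :
    ∃ v1 v2 M V : ℝ, |v1| + |v2| ≤ 1 ∧ |M| ≤ L ∧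
    ∫ s, ((v1 * P2 s - v2 * P1 s) - M) * Real.sqrt (a1 s ^ 2 + a2 s ^ 2) ∂mu01 = 0 ∧
    ∫ s, ((v1 * P2 s - v2 * P1 s) - M) ^ 2 * Real.sqrt (a1 s ^ 2 + a2 s ^ 2) ∂mu01 = V ∧
    (1 / 10 ^ 25 : ℝ) * L ^ 3 ≤ V := by
  have hL := A.pos
  obtain ⟨M, hM, h0, h1, h2⟩ := C.exists_mean A (v1 := 1) (v2 := 0) (by norm_num)
  obtain ⟨M', hM', h0', h1', h2'⟩ := C.exists_mean A (v1 := 0) (v2 := 1) (by norm_num)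
  by_cases hV : (1 / 10 ^ 25 : ℝ) * L ^ 3 ≤ ∫ s, (((1:ℝ) * P2 s - 0 * P1 s) - M) ^ 2 * Real.sqrt (a1 s ^ 2 + a2 s ^ 2) ∂mu01
  · exact ⟨1, 0, M, _, by norm_num, hM, h0, rfl, hV⟩
  by_cases hV' : (1 / 10 ^ 25 : ℝ) * L ^ 3 ≤ ∫ s, (((0:ℝ) * P2 s - 1 * P1 s) - M') ^ 2 * Real.sqrt (a1 s ^ 2 + a2 s ^ 2) ∂mu01
  · exact ⟨0, 1, M', _, by norm_num, hM', h0', rfl, hV'⟩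
  exfalso
  push Not at hV hV'
  set δ : ℝ := 1 / 10 ^ 8 with hδ
  have hL3 : 0 < L ^ 3 := by positivity
  have hd : 0 ≤ δ * L := by positivity
  have cub : (δ * L) ^ 3 = 1 / 10 ^ 24 * L ^ 3 := by rw [hδ]; ring
  have m2 : |M| ≤ δ * L := lt_of_cube hd (by rw [cub]; linarith)
  have m1 : |M'| ≤ δ * L := lt_of_cube hd (by rw [cub]; linarith)
  have n2 : |(1 * x.2.1 - 0 * x.1) - M| ≤ δ * L := lt_of_cube hd (by rw [cub]; linarith)
  have n1 : |(0 * x.2.1 - 1 * x.1) - M'| ≤ δ * L := lt_of_cube hd (by rw [cub]; linarith)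
  have x2 : |x.2.1| ≤ 2 * (δ * L) := by
    rw [abs_le] at *; constructor <;> linarith [n2.1, n2.2, m2.1, m2.2]
  have x1 : |x.1| ≤ 2 * (δ * L) := by
    rw [abs_le] at *; constructor <;> linarith [n1.1, n1.2, m1.1, m1.2]
  have hVs : (1 / 10 ^ 25 : ℝ) * L ^ 3 ≤ δ ^ 2 * L ^ 3 := by
    apply mul_le_mul_of_nonneg_right _ hL3.le; rw [hδ]; norm_num
  have i1 := small_mass (P := P1) (b := a2) (n := fun s => ((0:ℝ) * P2 s - 1 * P1 s) - M')
    (δ := δ) (M := M') A (by positivity) (fun s => abs_le2 s) m1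
    (fun s => by
      have := abs_sub (((0:ℝ) * P2 s - 1 * P1 s)) (((0:ℝ) * P2 s - 1 * P1 s) - M' )
      have e : |P1 s| = |(-(((0:ℝ) * P2 s - 1 * P1 s) - M')) - M'| := by congr 1; ring
      rw [e]
      refine (abs_sub _ _).trans ?_
      rw [abs_neg])
    (((C.h2.bdF.cmul 0).sub (C.h1.bdF.cmul 1)).sub (Bd.const _)) rfl (hV'.le.trans hVs)
  have i2 := small_mass (P := P2) (b := a1) (n := fun s => ((1:ℝ) * P2 s - 0 * P1 s) - M)
    (δ := δ) (M := M) A (by positivity) (fun s => abs_le1 s) m2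
    (fun s => by
      have e : |P2 s| = |(((1:ℝ) * P2 s - 0 * P1 s) - M) + M| := by congr 1; ring
      rw [e]
      exact abs_add_le _ _)
    (((C.h2.bdF.cmul 1).sub (C.h1.bdF.cmul 0)).sub (Bd.const _)) rfl (hV.le.trans hVs)
  have x3 : |x.2.2| ≤ 2 * δ * L ^ 2 := by
    rw [C.z, J_sub (C.h1.bdF.mul C.h2.bd) (C.h2.bdF.mul C.h1.bd), abs_mul]
    have ab : ∀ p q B : ℝ, |p| ≤ B → |q| ≤ B → 1 / 2 * |p - q| ≤ B := by
      intro p q B hp hq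
      have := abs_sub p q
      linarith
    have e : |(-(1/2) : ℝ)| = 1/2 := by rw [abs_neg]; exact abs_of_pos (by norm_num)
    rw [e]
    exact ab _ _ _ i1 i2
  have hc := ccNorm_le x
  have hs : Real.sqrt |x.2.2| ≤ L / 7000 := by
    rw [Real.sqrt_le_iff]
    refine ⟨by positivity, x3.trans ?_⟩
    rw [hδ]
    nlinarith [sq_nonneg L]
  rw [hδ] at x1 x2
  linarith

end Crv

theorem exists_crv (x : Heis) {c : ℝ} (hx : 0 < ccNorm x) (hc : ccNorm x < c) :
    ∃ P1 P2 a1 a2 l L, Crv x P1 P2 a1 a2 ∧ Arc l (fun s => Real.sqrt (a1 s ^ 2 + a2 s ^ 2)) L ∧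
      ccNorm x ≤ L ∧ L < c := by
  obtain ⟨P1, P2, a1, a2, h1, h2, s1, s2, e1, e2, z, hl, hl'⟩ := exists_near x hc
  have C : Crv x P1 P2 a1 a2 := ⟨h1, h2, s1, s2, e1, e2, z⟩
  obtain ⟨l, hA⟩ := C.exists_arc (hx.trans_le hl')
  exact ⟨P1, P2, a1, a2, l, _, C, hA, hl', hl⟩

/-- the coordinates are controlled by the distance -/
theorem coord_le_of_gt (x : Heis) {c : ℝ} (hc : ccNorm x < c) :
    |x.1| ≤ c ∧ |x.2.1| ≤ c ∧ |x.2.2| ≤ c ^ 2 := by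
  obtain ⟨P1, P2, a1, a2, h1, h2, s1, s2, e1, e2, z, hl, hl'⟩ := exists_near x hc
  have C : Crv x P1 P2 a1 a2 := ⟨h1, h2, s1, s2, e1, e2, z⟩
  have h0 : 0 ≤ ∫ s, Real.sqrt (a1 s ^ 2 + a2 s ^ 2) ∂mu01 := (ccNorm_nonneg x).trans hl'
  have hb : Bd (fun s => Real.sqrt (a1 s ^ 2 + a2 s ^ 2)) :=
    ((C.h1.bd.pow 2).add (C.h2.bd.pow 2)).sqrt
  rcases h0.eq_or_lt with h | h
  · have hc0 : 0 < c := by rw [← h] at hl; exact hl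
    have hz : (fun s => Real.sqrt (a1 s ^ 2 + a2 s ^ 2)) =ᵐ[mu01] 0 :=
      (integral_eq_zero_iff_of_nonneg (fun s => Real.sqrt_nonneg _) hb.integrable).1 h.symm
    have z1 : a1 =ᵐ[mu01] fun _ => 0 := by
      filter_upwards [hz] with s hs
      have : |a1 s| ≤ _ := Crv.abs_le1 (a2 := a2) s
      rw [hs] at this
      exact abs_nonpos_iff.1 this
    have z2 : a2 =ᵐ[mu01] fun _ => 0 := by
      filter_upwards [hz] with s hs
      have : |a2 s| ≤ _ := Crv.abs_le2 (a1 := a1) s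
      rw [hs] at this
      exact abs_nonpos_iff.1 this
    have k1 := h1.integral
    rw [integral_congr_ae z1, integral_zero, e1, s1] at k1
    have k2 := h2.integral
    rw [integral_congr_ae z2, integral_zero, e2, s2] at k2
    have k3 : x.2.2 = 0 := by
      rw [z, integral_eq_zero_of_ae, mul_zero]
      filter_upwards [z1, z2] with s p1 p2
      simp [p1, p2]
    rw [k3, show x.1 = 0 by linarith, show x.2.1 = 0 by linarith]
    simp [hc0.le]
  · obtain ⟨l, A⟩ := C.exists_arc h
    have a := C.P1_le A 0 (by simp)
    have b := C.P2_le A 0 (by simp)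
    have d := C.x3_le A
    rw [s1] at a
    rw [s2] at b
    refine ⟨a.trans hl.le, b.trans hl.le, d.trans ?_⟩
    exact pow_le_pow_left₀ h.le hl.le 2

theorem coord_le (x : Heis) :
    |x.1| ≤ ccNorm x ∧ |x.2.1| ≤ ccNorm x ∧ |x.2.2| ≤ ccNorm x ^ 2 := by
  refine ⟨le_of_forall_gt_imp_ge_of_dense fun c hc => (coord_le_of_gt x hc).1,
    le_of_forall_gt_imp_ge_of_dense fun c hc => (coord_le_of_gt x hc).2.1, ?_⟩
  have hs : Real.sqrt |x.2.2| ≤ ccNorm x := by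
    refine le_of_forall_gt_imp_ge_of_dense fun c hc => ?_
    rw [Real.sqrt_le_iff]
    exact ⟨(ccNorm_nonneg x).trans hc.le, (coord_le_of_gt x hc).2.2⟩
  exact (Real.sqrt_le_iff.1 hs).2

theorem ccNorm_pos {x : Heis} (hx : x ≠ 0) : 0 < ccNorm x := by
  refine (ccNorm_nonneg x).lt_of_ne fun h => hx ?_
  obtain ⟨a, b, c⟩ := coord_le x
  rw [← h] at a b c
  rw [zero_pow two_ne_zero] at c
  exact Prod.ext (abs_nonpos_iff.1 a) (Prod.ext (abs_nonpos_iff.1 b) (abs_nonpos_iff.1 c))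

theorem ccNorm_zero : ccNorm 0 = 0 := by
  refine le_antisymm ?_ (ccNorm_nonneg _)
  have := ccNorm_le 0
  simpa using this

/-- the variation statement around a point -/
theorem exists_variation (x : Heis) {c : ℝ} (hx : 0 < ccNorm x) (hc : ccNorm x < c)
    (hc2 : c ≤ 2 * ccNorm x) :
    ∃ L V A1 A2 D1 D2 α1 α2 α3 : ℝ, ccNorm x ≤ L ∧ L < c ∧ (1 / 10 ^ 25 : ℝ) * L ^ 3 ≤ V ∧
      |A1| ≤ L ∧ |A2| ≤ L ∧ |D1| ≤ 2 * L ^ 2 ∧ |D2| ≤ 2 * L ^ 2 ∧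
      |α3| ≤ 2 * L ^ 2 ∧ ∀ w1 w2 τ : ℝ,
      ccNorm ((x.1 + w1, x.2.1 + w2,
        x.2.2 + (A1 * w1 + A2 * w2) + τ * (V + (D1 * w1 + D2 * w2))) : Heis)
      ≤ L + (α1 * w1 + α2 * w2 + α3 * τ) + (w1 ^ 2 + w2 ^ 2) / L + 4 * L ^ 3 * τ ^ 2 := by
  obtain ⟨P1, P2, a1, a2, l, L, C, A, h1, h2⟩ := exists_crv x hx hc
  obtain ⟨v1, v2, M, V, hv, hM, hm, hV, hVL⟩ := C.exists_dir A (h2.le.trans hc2)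
  obtain ⟨A1, A2, D1, D2, α1, α2, α3, k1, k2, k3, k4, k5, k6⟩ := C.variation A hv hM hm hV
  exact ⟨L, V, A1, A2, D1, D2, α1, α2, α3, h1, h2, hVL, k1, k2, k3, k4, k5, k6⟩

set_option maxHeartbeats 1000000 in
/-- algebra for the second difference -/
theorem second_diff_alg {x3 e L V A D a1 a3 w h : ℝ} (hL : 0 < L) (he : 0 < e)
    (hV : e * L ^ 3 ≤ V) (hA : |A| ≤ L) (hD : |D| ≤ 2 * L ^ 2) (ha3 : |a3| ≤ 2 * L ^ 2)
    (hw : |w| ≤ L / 2) (hh : |h| ≤ e * L / 4) (he1 : e ≤ 1) {f g : ℝ}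
    (hf : ∀ τ, x3 + A * h + τ * (V + D * h) = x3 + h * w →
      f ≤ L + (a1 * h + a3 * τ) + h ^ 2 / L + 4 * L ^ 3 * τ ^ 2)
    (hg : ∀ τ, x3 - A * h + τ * (V - D * h) = x3 - h * w →
      g ≤ L + (-(a1 * h) + a3 * τ) + h ^ 2 / L + 4 * L ^ 3 * τ ^ 2) :
    f + g ≤ 2 * L + (122 / e ^ 2) * (h ^ 2 / L) := by
  have hVp : 0 < V := lt_of_lt_of_le (by positivity) hV
  have hDh : |D * h| ≤ V / 2 := by
    rw [abs_mul]
    have : |D| * |h| ≤ 2 * L ^ 2 * (e * L / 4) :=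
      mul_le_mul hD hh (abs_nonneg _) (by positivity)
    linarith
  obtain ⟨d1, d2⟩ := abs_le.1 hDh
  set b := w - A with hb
  have hbL : |b| ≤ 3 / 2 * L := by
    have := abs_sub w A
    linarith
  set p := V + D * h with hp
  set q := V - D * h with hq
  have hpV : V / 2 ≤ p := by linarith
  have hqV : V / 2 ≤ q := by linarith
  have hp0 : 0 < p := by linarith
  have hq0 : 0 < q := by linarith
  have h1 := hf (h * b / p) (by field_simp; rw [hb]; ring)
  have h2 := hg (-(h * b / q)) (by field_simp; rw [hb]; ring)
  have hLV : L ^ 5 / V ^ 2 ≤ 1 / e ^ 2 / L := by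
    rw [div_div, div_le_div_iff₀ (by positivity) (by positivity)]
    have : (e * L ^ 3) ^ 2 ≤ V ^ 2 := pow_le_pow_left₀ (by positivity) hV 2
    nlinarith
  have hb2 : b ^ 2 ≤ 9 / 4 * L ^ 2 := by
    rw [← sq_abs]; nlinarith [abs_nonneg b]
  have sqb : ∀ r, V / 2 ≤ r → (h * b / r) ^ 2 ≤ 9 * h ^ 2 * L ^ 2 / V ^ 2 := by
    intro r hr
    rw [div_pow, div_le_div_iff₀ (by have : 0 < r := by linarith
                                     positivity) (by positivity)]
    have k1 : V ^ 2 ≤ 4 * r ^ 2 := by nlinarith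
    have k2 : h ^ 2 * b ^ 2 ≤ h ^ 2 * (9 / 4 * L ^ 2) := mul_le_mul_of_nonneg_left hb2 (sq_nonneg _)
    calc (h * b) ^ 2 * V ^ 2 = h ^ 2 * b ^ 2 * V ^ 2 := by ring
      _ ≤ h ^ 2 * (9 / 4 * L ^ 2) * (4 * r ^ 2) :=
        mul_le_mul k2 k1 (sq_nonneg _) (by positivity)
      _ = _ := by ring
  have t1 := sqb p hpV
  have t2 := sqb q hqV
  have t3 : a3 * (h * b / p) + a3 * (-(h * b / q)) ≤ 48 * h ^ 2 * (L ^ 5 / V ^ 2) := by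
    have e1 : a3 * (h * b / p) + a3 * (-(h * b / q)) = - (2 * h ^ 2 * (a3 * (b * D))) / (p * q) := by
      field_simp; rw [hp, hq]; ring
    have k1 : |a3 * (b * D)| ≤ 2 * L ^ 2 * (3 / 2 * L * (2 * L ^ 2)) := by
      rw [abs_mul, abs_mul]
      exact mul_le_mul ha3 (mul_le_mul hbL hD (abs_nonneg _) (by positivity)) (by positivity)
        (by positivity)
    have k2 : -(a3 * (b * D)) ≤ 6 * L ^ 5 := by
      have := (abs_le.1 k1).1
      linarith
    have k3 : V ^ 2 ≤ 4 * (p * q) := by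
      have := mul_le_mul hpV hqV (by positivity) hp0.le
      linarith
    rw [e1]
    calc - (2 * h ^ 2 * (a3 * (b * D))) / (p * q) = 2 * h ^ 2 * (-(a3 * (b * D))) / (p * q) := by ring
      _ ≤ 2 * h ^ 2 * (6 * L ^ 5) / (p * q) := by gcongr
      _ ≤ 2 * h ^ 2 * (6 * L ^ 5) / (V ^ 2 / 4) := by
        apply div_le_div_of_nonneg_left (by positivity) (by positivity) (by linarith)
      _ = _ := by field_simp; ring
  have t4 : 4 * L ^ 3 * (h * b / p) ^ 2 ≤ 36 * h ^ 2 * (L ^ 5 / V ^ 2) := by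
    have := mul_le_mul_of_nonneg_left t1 (show 0 ≤ 4 * L ^ 3 by positivity)
    refine this.trans (le_of_eq ?_)
    field_simp; ring
  have t5 : 4 * L ^ 3 * (-(h * b / q)) ^ 2 ≤ 36 * h ^ 2 * (L ^ 5 / V ^ 2) := by
    have := mul_le_mul_of_nonneg_left t2 (show 0 ≤ 4 * L ^ 3 by positivity)
    rw [neg_sq]
    refine this.trans (le_of_eq ?_)
    field_simp; ring
  have t6 : h ^ 2 * (L ^ 5 / V ^ 2) ≤ h ^ 2 * (1 / e ^ 2 / L) :=
    mul_le_mul_of_nonneg_left hLV (sq_nonneg _)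
  have t7 : h ^ 2 / L ≤ h ^ 2 * (1 / e ^ 2 / L) := by
    have : 1 ≤ 1 / e ^ 2 := by
      rw [le_div_iff₀ (by positivity)]; nlinarith
    have h0 : 0 ≤ h ^ 2 / L := by positivity
    calc h ^ 2 / L = h ^ 2 / L * 1 := by ring
      _ ≤ h ^ 2 / L * (1 / e ^ 2) := mul_le_mul_of_nonneg_left this h0
      _ = _ := by ring
  have t8 : (122 / e ^ 2) * (h ^ 2 / L) = 122 * (h ^ 2 * (1 / e ^ 2 / L)) := by ring
  rw [t8]
  linarith

theorem second_diff_far (x : Heis) {e h u1 u2 : ℝ} (hx : 0 < ccNorm x) (he : 0 < e) (he1 : e ≤ 1)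
    (hu : |u1| + |u2| ≤ 1) (hh : e * ccNorm x / 4 < |h|) :
    ccNorm ((x.1 + h * u1, x.2.1 + h * u2, x.2.2 + h * ((x.1 * u2 - x.2.1 * u1) / 2)) : Heis) ≤
      (28036 / e ^ 2) * (h ^ 2 / ccNorm x) := by
  obtain ⟨c1, c2, c3⟩ := coord_le x
  set d := ccNorm x with hd
  have hy := ccNorm_le ((x.1 + h * u1, x.2.1 + h * u2, x.2.2 + h * ((x.1 * u2 - x.2.1 * u1) / 2)) : Heis)
  simp only at hy
  have hu1 : |u1| ≤ 1 := by linarith [abs_nonneg u2]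
  have hu2 : |u2| ≤ 1 := by linarith [abs_nonneg u1]
  have h0 := abs_nonneg h
  have k1 : |x.1 + h * u1| ≤ d + |h| * |u1| := by
    refine (abs_add_le _ _).trans ?_
    rw [abs_mul]; linarith
  have k2 : |x.2.1 + h * u2| ≤ d + |h| * |u2| := by
    refine (abs_add_le _ _).trans ?_
    rw [abs_mul]; linarith
  have k3 : |x.1 * u2 - x.2.1 * u1| ≤ d := by
    refine (abs_sub _ _).trans ?_
    rw [abs_mul, abs_mul]
    have := mul_le_mul_of_nonneg_right c1 (abs_nonneg u2)
    have := mul_le_mul_of_nonneg_right c2 (abs_nonneg u1)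
    nlinarith
  have k4 : |x.2.2 + h * ((x.1 * u2 - x.2.1 * u1) / 2)| ≤ (d + |h|) ^ 2 := by
    refine (abs_add_le _ _).trans ?_
    rw [abs_mul, abs_div, abs_two]
    have := mul_le_mul_of_nonneg_left k3 h0
    nlinarith [sq_nonneg |h|]
  have k5 : Real.sqrt |x.2.2 + h * ((x.1 * u2 - x.2.1 * u1) / 2)| ≤ d + |h| :=
    Real.sqrt_le_iff.2 ⟨by positivity, k4⟩
  have k6 : |h| * |u1| + |h| * |u2| ≤ |h| := by nlinarith
  have k7 : d ≤ 4 / e * |h| := by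
    rw [div_mul_eq_mul_div, le_div_iff₀ he]; linarith
  have k8 : |h| ≤ 1 / e * |h| := by
    have : 1 ≤ 1 / e := by rw [le_div_iff₀ he]; linarith
    nlinarith
  have k9 : |h| ≤ 4 / e * (h ^ 2 / d) := by
    rw [← sq_abs h]
    have : d * |h| ≤ 4 / e * |h| * |h| := mul_le_mul_of_nonneg_right k7 h0
    rw [← mul_div_assoc, le_div_iff₀ hx]
    linarith
  have k10 : (7009 / e) * |h| ≤ (7009 / e) * (4 / e * (h ^ 2 / d)) :=
    mul_le_mul_of_nonneg_left k9 (by positivity)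
  have k11 : (7009 / e) * (4 / e * (h ^ 2 / d)) = (28036 / e ^ 2) * (h ^ 2 / d) := by
    field_simp; ring
  rw [k11] at k10
  refine le_trans ?_ k10
  have k12 : (7009 / e) * |h| = 1402 * (4 / e * |h|) + 1401 * (1 / e * |h|) := by ring
  rw [k12]
  linarith

/-- second difference bound -/
theorem second_diff : ∃ K : ℝ, 0 < K ∧ ∀ (x : Heis) (h u1 u2 : ℝ), x ≠ 0 → |u1| + |u2| ≤ 1 →
    ccNorm ((x.1 + h * u1, x.2.1 + h * u2, x.2.2 + h * ((x.1 * u2 - x.2.1 * u1) / 2)) : Heis) +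
    ccNorm ((x.1 - h * u1, x.2.1 - h * u2, x.2.2 - h * ((x.1 * u2 - x.2.1 * u1) / 2)) : Heis)
      ≤ 2 * ccNorm x + K * (h ^ 2 / ccNorm x) := by
  obtain ⟨e, he⟩ : ∃ e : ℝ, e = 1 / 10 ^ 25 := ⟨_, rfl⟩
  have he0 : 0 < e := by rw [he]; positivity
  have he1 : e ≤ 1 := by rw [he]; norm_num
  refine ⟨56072 / e ^ 2, by positivity, ?_⟩
  intro x h u1 u2 hx0 hu
  have hx := ccNorm_pos hx0
  obtain ⟨c1, c2, c3⟩ := coord_le x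
  rcases lt_or_ge (e * ccNorm x / 4) |h| with hh | hh
  · have f1 := second_diff_far x hx he0 he1 hu hh
    have f2 := second_diff_far x (h := -h) hx he0 he1 hu (by rwa [abs_neg])
    simp only [neg_mul, ← sub_eq_add_neg, neg_sq] at f2
    have : 56072 / e ^ 2 * (h ^ 2 / ccNorm x) = 2 * (28036 / e ^ 2 * (h ^ 2 / ccNorm x)) := by ring
    rw [this]
    linarith
  · refine le_of_forall_pos_le_add fun η hη => ?_
    obtain ⟨L, V, A1, A2, D1, D2, α1, α2, α3, l1, l2, hV, hA1, hA2, hD1, hD2, hα, key⟩ :=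
      exists_variation x (c := min (2 * ccNorm x) (ccNorm x + η / 2)) hx
        (lt_min (by linarith) (by linarith)) (min_le_left _ _)
    have l3 : L < ccNorm x + η / 2 := l2.trans_le (min_le_right _ _)
    have hL : 0 < L := hx.trans_le l1
    rw [← he] at hV
    have comb : ∀ {p q B : ℝ}, |p| ≤ B → |q| ≤ B → 0 ≤ B → |p * u1 + q * u2| ≤ B := by
      intro p q B hp hq hB
      refine (abs_add_le _ _).trans ?_
      rw [abs_mul, abs_mul]
      nlinarith [abs_nonneg u1, abs_nonneg u2]
    have huu : u1 ^ 2 + u2 ^ 2 ≤ 1 := by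
      rw [← sq_abs u1, ← sq_abs u2]
      nlinarith [abs_nonneg u1, abs_nonneg u2]
    have hq : ((h * u1) ^ 2 + (h * u2) ^ 2) / L ≤ h ^ 2 / L := by
      apply div_le_div_of_nonneg_right _ hL.le
      nlinarith [sq_nonneg h]
    have hw : |(x.1 * u2 - x.2.1 * u1) / 2| ≤ L / 2 := by
      rw [abs_div, abs_two]
      apply div_le_div_of_nonneg_right _ zero_le_two
      have := comb (p := -x.2.1) (q := x.1) (B := L) (by rw [abs_neg]; linarith) (by linarith) hL.le
      rwa [show -x.2.1 * u1 + x.1 * u2 = x.1 * u2 - x.2.1 * u1 by ring] at this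
    have main := second_diff_alg (x3 := x.2.2) (e := e) (L := L) (V := V)
      (A := A1 * u1 + A2 * u2)
      (D := D1 * u1 + D2 * u2) (a1 := α1 * u1 + α2 * u2) (a3 := α3)
      (w := (x.1 * u2 - x.2.1 * u1) / 2) (h := h)
      (f := ccNorm ((x.1 + h * u1, x.2.1 + h * u2, x.2.2 + h * ((x.1 * u2 - x.2.1 * u1) / 2)) : Heis))
      (g := ccNorm ((x.1 - h * u1, x.2.1 - h * u2, x.2.2 - h * ((x.1 * u2 - x.2.1 * u1) / 2)) : Heis))
      hL he0 hV (comb hA1 hA2 hL.le) (comb hD1 hD2 (by positivity)) hα hw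
      (hh.trans (by gcongr)) he1 ?_ ?_
    · have e1 : (122 / e ^ 2) * (h ^ 2 / L) ≤ 56072 / e ^ 2 * (h ^ 2 / ccNorm x) := by
        gcongr
        norm_num
      linarith
    · intro τ hτ
      have := key (h * u1) (h * u2) τ
      rw [← hτ]
      have e1 : x.2.2 + (A1 * (h * u1) + A2 * (h * u2)) + τ * (V + (D1 * (h * u1) + D2 * (h * u2)))
        = x.2.2 + (A1 * u1 + A2 * u2) * h + τ * (V + (D1 * u1 + D2 * u2) * h) := by ring
      rw [e1] at this
      refine this.trans ?_
      linarith
    · intro τ hτ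
      have := key (-h * u1) (-h * u2) τ
      rw [← hτ]
      have e1 : x.2.2 + (A1 * (-h * u1) + A2 * (-h * u2)) + τ * (V + (D1 * (-h * u1) + D2 * (-h * u2)))
        = x.2.2 - (A1 * u1 + A2 * u2) * h + τ * (V - (D1 * u1 + D2 * u2) * h) := by ring
      rw [e1] at this
      have e2 : x.1 + -h * u1 = x.1 - h * u1 := by ring
      have e3 : x.2.1 + -h * u2 = x.2.1 - h * u2 := by ring
      rw [e2, e3] at this
      refine this.trans ?_
      have e4 : (-h * u1) ^ 2 + (-h * u2) ^ 2 = (h * u1) ^ 2 + (h * u2) ^ 2 := by ring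
      rw [e4]
      linarith

theorem ccNorm_usc : UpperSemicontinuous ccNorm := by
  intro x y hy
  by_cases hx0 : x = 0
  · subst hx0
    rw [ccNorm_zero] at hy
    have hc : Continuous fun z : Heis => |z.1| + |z.2.1| + 1400 * Real.sqrt |z.2.2| := by fun_prop
    have := hc.tendsto 0
    simp only [Prod.fst_zero, Prod.snd_zero, abs_zero, Real.sqrt_zero, mul_zero, add_zero] at this
    filter_upwards [this.eventually (gt_mem_nhds hy)] with z hz
    exact (ccNorm_le z).trans_lt hz
  · have hx := ccNorm_pos hx0
    obtain ⟨L, V, A1, A2, D1, D2, α1, α2, α3, l1, l2, hV, -, -, -, -, -, key⟩ :=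
      exists_variation x (c := min (2 * ccNorm x) y) hx
        (lt_min (by linarith) hy) (min_le_left _ _)
    have l3 : L < y := l2.trans_le (min_le_right _ _)
    have hL : 0 < L := hx.trans_le l1
    have hVp : 0 < V := lt_of_lt_of_le (by positivity) hV
    let P : Heis → ℝ := fun z => V + (D1 * (z.1 - x.1) + D2 * (z.2.1 - x.2.1))
    let T : Heis → ℝ := fun z => (z.2.2 - x.2.2 - (A1 * (z.1 - x.1) + A2 * (z.2.1 - x.2.1))) / P z
    have hPc : Continuous P := by fun_prop
    have hPx : P x = V := by simp [P]
    have hTc : ContinuousAt T x := by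
      apply ContinuousAt.div
      · fun_prop
      · exact hPc.continuousAt
      · rw [hPx]; exact hVp.ne'
    have hTx : T x = 0 := by simp [T]
    let G : Heis → ℝ := fun z => L + (α1 * (z.1 - x.1) + α2 * (z.2.1 - x.2.1) + α3 * T z) +
      ((z.1 - x.1) ^ 2 + (z.2.1 - x.2.1) ^ 2) / L + 4 * L ^ 3 * T z ^ 2
    have hGc : ContinuousAt G x := by fun_prop
    have hGx : G x = L := by simp [G, hTx]
    have e1 : ∀ᶠ z in nhds x, G z < y := hGc.eventually (gt_mem_nhds (by rw [hGx]; exact l3))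
    have e2 : ∀ᶠ z in nhds x, 0 < P z :=
      hPc.continuousAt.eventually (lt_mem_nhds (by rw [hPx]; exact hVp))
    filter_upwards [e1, e2] with z z1 z2
    have := key (z.1 - x.1) (z.2.1 - x.2.1) (T z)
    have e3 : ((x.1 + (z.1 - x.1), x.2.1 + (z.2.1 - x.2.1),
        x.2.2 + (A1 * (z.1 - x.1) + A2 * (z.2.1 - x.2.1)) +
          T z * (V + (D1 * (z.1 - x.1) + D2 * (z.2.1 - x.2.1)))) : Heis) = z := by
      have h3 : T z * (V + (D1 * (z.1 - x.1) + D2 * (z.2.1 - x.2.1))) =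
        z.2.2 - x.2.2 - (A1 * (z.1 - x.1) + A2 * (z.2.1 - x.2.1)) := div_mul_cancel₀ _ z2.ne'
      rw [h3]
      refine Prod.ext ?_ (Prod.ext ?_ ?_) <;> simp
    rw [e3] at this
    exact this.trans_lt z1

theorem ccNorm_measurable : Measurable ccNorm := ccNorm_usc.measurable

/-- the right translation by `h u` -/
noncomputable def HT (u1 u2 h : ℝ) (x : Heis) : Heis :=
  (x.1 + h * u1, x.2.1 + h * u2, x.2.2 + h * ((x.1 * u2 - x.2.1 * u1) / 2))

/-- derivative in the horizontal direction `u` -/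
noncomputable def HY (u1 u2 : ℝ) (f : Heis → ℝ) (x : Heis) : ℝ :=
  fderiv ℝ f x ((u1, u2, (x.1 * u2 - x.2.1 * u1) / 2) : Heis)

theorem HT_neg (u1 u2 h : ℝ) (x : Heis) : HT u1 u2 (-h) x =
    (x.1 - h * u1, x.2.1 - h * u2, x.2.2 - h * ((x.1 * u2 - x.2.1 * u1) / 2)) := by
  simp only [HT, neg_mul, sub_eq_add_neg]

theorem HT_HT (u1 u2 h k : ℝ) (x : Heis) : HT u1 u2 h (HT u1 u2 k x) = HT u1 u2 (h + k) x := by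
  refine Prod.ext ?_ (Prod.ext ?_ ?_) <;> simp only [HT] <;> ring

theorem HT_zero (u1 u2 : ℝ) (x : Heis) : HT u1 u2 0 x = x := by
  refine Prod.ext ?_ (Prod.ext ?_ ?_) <;> simp only [HT] <;> ring

theorem HT_continuous (u1 u2 : ℝ) : Continuous fun p : ℝ × Heis => HT u1 u2 p.1 p.2 := by
  unfold HT; fun_prop

theorem HT_cont (u1 u2 h : ℝ) : Continuous (HT u1 u2 h) := by
  unfold HT; fun_prop

theorem HT_inj (u1 u2 h : ℝ) : Function.Injective (HT u1 u2 h) := by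
  intro x y hxy
  have := congrArg (HT u1 u2 (-h)) hxy
  simpa only [HT_HT, neg_add_cancel, HT_zero] using this

theorem HT_emb (u1 u2 h : ℝ) : MeasurableEmbedding (HT u1 u2 h) :=
  (HT_cont u1 u2 h).measurable.measurableEmbedding (HT_inj u1 u2 h)

theorem HT_mp (u1 u2 h : ℝ) : MeasurePreserving (HT u1 u2 h) volume volume := by
  have inner : ∀ a : ℝ, MeasurePreserving
      (fun y : ℝ × ℝ => (y.1 + h * u2, y.2 + h * ((a * u2 - y.1 * u1) / 2))) volume volume := by
    intro a
    refine MeasurePreserving.skew_product (f := fun t : ℝ => t + h * u2)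
      (g := fun s t : ℝ => t + h * ((a * u2 - s * u1) / 2)) (measurePreserving_add_right _ _) ?_ ?_
    · exact Continuous.measurable (by unfold Function.uncurry; fun_prop)
    · exact Eventually.of_forall fun s => (measurePreserving_add_right _ _).map_eq
  exact MeasurePreserving.skew_product (f := fun t : ℝ => t + h * u1)
      (g := fun a (y : ℝ × ℝ) => (y.1 + h * u2, y.2 + h * ((a * u2 - y.1 * u1) / 2)))
      (measurePreserving_add_right _ _)
      (Continuous.measurable (by unfold Function.uncurry; fun_prop))
      (Eventually.of_forall fun a => (inner a).map_eq)

theorem HT_hasDerivAt (u1 u2 : ℝ) (x : Heis) (t : ℝ) :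
    HasDerivAt (fun t => HT u1 u2 t x) ((u1, u2, ((HT u1 u2 t x).1 * u2 - (HT u1 u2 t x).2.1 * u1) / 2) : Heis) t := by
  have e : ((HT u1 u2 t x).1 * u2 - (HT u1 u2 t x).2.1 * u1) / 2 = (x.1 * u2 - x.2.1 * u1) / 2 := by
    simp only [HT]; ring
  rw [e]
  unfold HT
  refine HasDerivAt.prodMk ?_ (HasDerivAt.prodMk ?_ ?_)
  · simpa using ((hasDerivAt_id t).mul_const u1).const_add x.1
  · simpa using ((hasDerivAt_id t).mul_const u2).const_add x.2.1
  · simpa using ((hasDerivAt_id t).mul_const ((x.1 * u2 - x.2.1 * u1) / 2)).const_add x.2.2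

theorem comp_hasDerivAt {f : Heis → ℝ} (hf : Differentiable ℝ f) (u1 u2 : ℝ) (x : Heis) (t : ℝ) :
    HasDerivAt (fun t => f (HT u1 u2 t x)) (HY u1 u2 f (HT u1 u2 t x)) t :=
  (hf (HT u1 u2 t x)).hasFDerivAt.comp_hasDerivAt t (HT_hasDerivAt u1 u2 x t)

theorem HY_contDiff {f : Heis → ℝ} (hf : ContDiff ℝ (⊤ : ℕ∞) f) (u1 u2 : ℝ) :
    ContDiff ℝ (⊤ : ℕ∞) (HY u1 u2 f) := by
  unfold HY
  have h1 : ContDiff ℝ (⊤ : ℕ∞) (fderiv ℝ f) := hf.fderiv_right (by simp)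
  exact h1.clm_apply (by fun_prop)

theorem HY_zero {f : Heis → ℝ} (u1 u2 : ℝ) {x : Heis} (hx : x ∉ tsupport f) : HY u1 u2 f x = 0 := by
  unfold HY
  rw [fderiv_of_notMem_tsupport ℝ hx]
  rfl

theorem HY_tsupport (f : Heis → ℝ) (u1 u2 : ℝ) : tsupport (HY u1 u2 f) ⊆ tsupport f := by
  refine closure_minimal (fun x hx => ?_) (isClosed_tsupport f)
  by_contra h
  exact hx (HY_zero u1 u2 h)

theorem X1_eq : X1 = HY 1 0 := by
  funext f x
  unfold X1 HY
  have : ((1, 0, (x.1 * 0 - x.2.1 * 1) / 2) : Heis) = (1, 0, 0) - (x.2.1 / 2) • ((0, 0, 1) : Heis) := by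
    refine Prod.ext ?_ (Prod.ext ?_ ?_) <;> simp; ring
  rw [this, map_sub, map_smul, smul_eq_mul]

theorem X2_eq : X2 = HY 0 1 := by
  funext f x
  unfold X2 HY
  have : ((0, 1, (x.1 * 1 - x.2.1 * 0) / 2) : Heis) = (0, 1, 0) + (x.1 / 2) • ((0, 0, 1) : Heis) := by
    refine Prod.ext ?_ (Prod.ext ?_ ?_) <;> simp
  rw [this, map_add, map_smul, smul_eq_mul]

theorem second_mvt {p p' p'' : ℝ → ℝ} (h1 : ∀ t, HasDerivAt p (p' t) t)
    (h2 : ∀ t, HasDerivAt p' (p'' t) t) {h : ℝ} (hh : 0 < h) :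
    ∃ c, |c| < h ∧ p h + p (-h) - 2 * p 0 = h ^ 2 * p'' c := by
  have hG : ∀ t, HasDerivAt (fun t => p t + p (-t)) (p' t - p' (-t)) t := by
    intro t
    have k := (h1 (-t)).comp t (hasDerivAt_neg t)
    have := (h1 t).add k
    refine this.congr_deriv ?_
    ring
  have hS : ∀ t : ℝ, HasDerivAt (fun t : ℝ => t ^ 2) (2 * t) t := by
    intro t
    simpa using hasDerivAt_pow 2 t
  obtain ⟨c, hc, e⟩ := exists_ratio_hasDerivAt_eq_ratio_slope (fun t => p t + p (-t))
    (fun t => p' t - p' (-t)) hh (fun t _ => (hG t).continuousAt.continuousWithinAt)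
    (fun t _ => hG t) (fun t => t ^ 2) (fun t => 2 * t)
    (fun t _ => (hS t).continuousAt.continuousWithinAt) (fun t _ => hS t)
  obtain ⟨ξ, hξ, e2⟩ := exists_hasDerivAt_eq_slope p' p'' (show -c < c by linarith [hc.1])
    (fun t _ => (h2 t).continuousAt.continuousWithinAt) (fun t _ => h2 t)
  refine ⟨ξ, by rw [abs_lt]; constructor <;> linarith [hξ.1, hξ.2, hc.2], ?_⟩
  have hc0 : c ≠ 0 := hc.1.ne'
  have e3 : p' c - p' (-c) = 2 * c * p'' ξ := by
    rw [e2]; field_simp; ring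
  rw [e3] at e
  simp only [neg_zero] at e
  have : c * (p h + p (-h) - 2 * p 0) = c * (h ^ 2 * p'' ξ) := by linarith
  exact mul_left_cancel₀ hc0 this

/-- majorant of the distance -/
noncomputable def HB (z : Heis) : ℝ := |z.1| + |z.2.1| + 1400 * Real.sqrt |z.2.2|

theorem HB_cont : Continuous HB := by unfold HB; fun_prop

theorem HB_nonneg (z : Heis) : 0 ≤ HB z := by unfold HB; positivity

theorem integrable_trans {g : Heis → ℝ} (hg : Continuous g) (hc : HasCompactSupport g)
    (u1 u2 h : ℝ) : Integrable (fun x => ccNorm (HT u1 u2 h x) * g x) := by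
  have h1 : Integrable (fun x => HB (HT u1 u2 h x) * g x) :=
    ((HB_cont.comp (HT_cont u1 u2 h)).mul hg).integrable_of_hasCompactSupport hc.mul_left
  refine h1.mono ?_ (Eventually.of_forall fun x => ?_)
  · exact ((ccNorm_measurable.comp (HT_cont u1 u2 h).measurable).mul hg.measurable).aestronglyMeasurable
  · rw [norm_mul, norm_mul, Real.norm_of_nonneg (ccNorm_nonneg _), Real.norm_of_nonneg (HB_nonneg _)]
    exact mul_le_mul_of_nonneg_right (ccNorm_le _) (norm_nonneg _)

theorem integrable_mul {g : Heis → ℝ} (hg : Continuous g) (hc : HasCompactSupport g) :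
    Integrable (fun x => ccNorm x * g x) := by
  simpa only [HT_zero] using integrable_trans hg hc 0 0 0

theorem trans_eq {g : Heis → ℝ} (u1 u2 h : ℝ) :
    (fun x => ccNorm x * g (HT u1 u2 h x)) =
      (fun y => ccNorm (HT u1 u2 (-h) y) * g y) ∘ HT u1 u2 h := by
  funext x
  simp only [Function.comp, HT_HT, neg_add_cancel, HT_zero]

theorem integrable_trans' {g : Heis → ℝ} (hg : Continuous g) (hc : HasCompactSupport g)
    (u1 u2 h : ℝ) : Integrable (fun x => ccNorm x * g (HT u1 u2 h x)) := by
  rw [trans_eq]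
  exact ((HT_mp u1 u2 h).integrable_comp_emb (HT_emb u1 u2 h)).2 (integrable_trans hg hc u1 u2 (-h))

theorem integral_trans (g : Heis → ℝ) (u1 u2 h : ℝ) :
    ∫ x, ccNorm x * g (HT u1 u2 h x) = ∫ x, ccNorm (HT u1 u2 (-h) x) * g x := by
  rw [trans_eq]
  exact (HT_mp u1 u2 h).integral_comp (HT_emb u1 u2 h)
    (fun y => ccNorm (HT u1 u2 (-h) y) * g y)

/-- one dimensional singular majorant -/
noncomputable def Hg (R t : ℝ) : ℝ :=
  (Set.Ioc 0 R).indicator (fun t => t ^ (-(1/2) : ℝ)) t +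
    (Set.Ioc 0 R).indicator (fun t => t ^ (-(1/2) : ℝ)) (-t)

theorem Hg_integrable (R : ℝ) (hR : 0 ≤ R) : Integrable (Hg R) := by
  have h1 : Integrable ((Set.Ioc 0 R).indicator (fun t : ℝ => t ^ (-(1/2) : ℝ))) := by
    rw [integrable_indicator_iff measurableSet_Ioc, ← intervalIntegrable_iff_integrableOn_Ioc_of_le hR]
    exact intervalIntegral.intervalIntegrable_rpow' (by norm_num)
  exact h1.add h1.comp_neg

theorem Hg_eq {R t : ℝ} (ht : t ≠ 0) (hR : |t| ≤ R) : Hg R t = |t| ^ (-(1/2) : ℝ) := by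
  unfold Hg
  rcases ht.lt_or_gt with h | h
  · rw [abs_of_neg h] at hR ⊢
    rw [Set.indicator_of_notMem (by simp [h.le]), Set.indicator_of_mem (by simp [h, hR]), zero_add]
  · rw [abs_of_pos h] at hR ⊢
    rw [Set.indicator_of_mem (by simp [h, hR]), Set.indicator_of_notMem (by simp [h.le]), add_zero]

theorem integrable_div {g : Heis → ℝ} (hg : Continuous g) (hc : HasCompactSupport g) :
    Integrable (fun x => g x / ccNorm x) := by
  obtain ⟨R0, hR0⟩ := (hc.isCompact.isBounded).subset_closedBall (0 : Heis)
  set R := max R0 0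
  have hR : 0 ≤ R := le_max_right _ _
  have hsupp : ∀ x, g x ≠ 0 → ‖x‖ ≤ R := by
    intro x hx
    have := hR0 (subset_tsupport g hx)
    rw [mem_closedBall_zero_iff] at this
    exact this.trans (le_max_left _ _)
  obtain ⟨C, hC⟩ := hc.exists_bound_of_continuous hg
  have C0 : 0 ≤ C := (norm_nonneg _).trans (hC 0)
  have i3 : Integrable ((Set.Icc (-R) R).indicator (fun _ : ℝ => C)) := by
    rw [integrable_indicator_iff measurableSet_Icc]
    exact continuousOn_const.integrableOn_Icc
  have i23 : Integrable (fun y : ℝ × ℝ => Hg R y.1 * (Set.Icc (-R) R).indicator (fun _ : ℝ => C) y.2) :=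
    (Hg_integrable R hR).mul_prod i3
  have i123 : Integrable (fun x : Heis => Hg R x.1 * (Hg R x.2.1 * (Set.Icc (-R) R).indicator (fun _ : ℝ => C) x.2.2)) :=
    (Hg_integrable R hR).mul_prod i23
  have n1 : ∀ᵐ x : Heis, x.1 ≠ 0 := by
    have : ∀ᵐ t : ℝ, t ≠ 0 := by simp [ae_iff]
    exact (Measure.quasiMeasurePreserving_fst (μ := (volume : Measure ℝ)) (ν := (volume : Measure (ℝ × ℝ)))).ae this
  have n2 : ∀ᵐ x : Heis, x.2.1 ≠ 0 := by
    have : ∀ᵐ t : ℝ, t ≠ 0 := by simp [ae_iff]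
    have h2 : ∀ᵐ y : ℝ × ℝ, y.1 ≠ 0 :=
      (Measure.quasiMeasurePreserving_fst (μ := (volume : Measure ℝ)) (ν := (volume : Measure ℝ))).ae this
    exact (Measure.quasiMeasurePreserving_snd (μ := (volume : Measure ℝ)) (ν := (volume : Measure (ℝ × ℝ)))).ae h2
  refine i123.mono' (hg.measurable.div ccNorm_measurable).aestronglyMeasurable ?_
  filter_upwards [n1, n2] with x hx1 hx2
  by_cases hgx : g x = 0
  · rw [hgx, zero_div, norm_zero]
    have hn : ∀ t, 0 ≤ Hg R t := by
      intro t
      unfold Hg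
      refine add_nonneg ?_ ?_ <;>
      exact Set.indicator_nonneg (fun s hs => Real.rpow_nonneg hs.1.le _) _
    exact mul_nonneg (hn _) (mul_nonneg (hn _) (Set.indicator_nonneg (fun _ _ => C0) _))
  · have hx := hsupp x hgx
    have a1 : |x.1| ≤ R := (norm_fst_le x).trans hx
    have a2 : |x.2.1| ≤ R := (norm_fst_le x.2).trans ((norm_snd_le x).trans hx)
    have a3 : |x.2.2| ≤ R := (norm_snd_le x.2).trans ((norm_snd_le x).trans hx)
    rw [Hg_eq hx1 a1, Hg_eq hx2 a2, Set.indicator_of_mem (by exact abs_le.1 a3)]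
    obtain ⟨c1, c2, -⟩ := coord_le x
    have p1 : 0 < |x.1| := abs_pos.2 hx1
    have p2 : 0 < |x.2.1| := abs_pos.2 hx2
    have hd : 0 < ccNorm x := p1.trans_le c1
    rw [norm_div, Real.norm_of_nonneg hd.le, div_le_iff₀ hd]
    have k1 : ccNorm x ^ (-(1/2) : ℝ) ≤ |x.1| ^ (-(1/2) : ℝ) :=
      Real.rpow_le_rpow_of_nonpos p1 c1 (by norm_num)
    have k2 : ccNorm x ^ (-(1/2) : ℝ) ≤ |x.2.1| ^ (-(1/2) : ℝ) :=
      Real.rpow_le_rpow_of_nonpos p2 c2 (by norm_num)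
    have k3 : ccNorm x ^ (-(1/2) : ℝ) * ccNorm x ^ (-(1/2) : ℝ) ≤ |x.1| ^ (-(1/2) : ℝ) * |x.2.1| ^ (-(1/2) : ℝ) :=
      mul_le_mul k1 k2 (Real.rpow_nonneg hd.le _) (Real.rpow_nonneg p1.le _)
    rw [← Real.rpow_add hd, show (-(1/2) + -(1/2) : ℝ) = -1 by norm_num, Real.rpow_neg_one] at k3
    have k4 := mul_le_mul_of_nonneg_right k3 hd.le
    rw [inv_mul_cancel₀ hd.ne'] at k4
    have := mul_le_mul_of_nonneg_right k4 C0
    linarith [hC x]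

theorem ae_ne_zero : ∀ᵐ x : Heis, x ≠ 0 := by
  have : ∀ᵐ t : ℝ, t ≠ 0 := by simp [ae_iff]
  have h := (Measure.quasiMeasurePreserving_fst (μ := (volume : Measure ℝ)) (ν := (volume : Measure (ℝ × ℝ)))).ae this
  have h' : ∀ᵐ x : Heis, x.1 ≠ 0 := h
  filter_upwards [h'] with x hx h0
  exact hx (by rw [h0]; rfl)

/-- integrated second difference -/
theorem diff_integral_le {K : ℝ} (hK : ∀ (x : Heis) (h u1 u2 : ℝ), x ≠ 0 → |u1| + |u2| ≤ 1 →
    ccNorm ((x.1 + h * u1, x.2.1 + h * u2, x.2.2 + h * ((x.1 * u2 - x.2.1 * u1) / 2)) : Heis) +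
    ccNorm ((x.1 - h * u1, x.2.1 - h * u2, x.2.2 - h * ((x.1 * u2 - x.2.1 * u1) / 2)) : Heis)
      ≤ 2 * ccNorm x + K * (h ^ 2 / ccNorm x)) {φ : Heis → ℝ} (hφ : Continuous φ)
    (hc : HasCompactSupport φ) (h0 : ∀ x, 0 ≤ φ x) {u1 u2 : ℝ} (hu : |u1| + |u2| ≤ 1) (h : ℝ) :
    ∫ x, ccNorm x * (φ (HT u1 u2 h x) + φ (HT u1 u2 (-h) x) - 2 * φ x) ≤
      h ^ 2 * (K * ∫ x, φ x / ccNorm x) := by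
  have j1 := integrable_trans' hφ hc u1 u2 h
  have j2 := integrable_trans' hφ hc u1 u2 (-h)
  have j3 := (integrable_mul hφ hc).const_mul 2
  have j1' := integrable_trans hφ hc u1 u2 (-h)
  have j2' := integrable_trans hφ hc u1 u2 h
  have j12 : Integrable (fun x => ccNorm x * φ (HT u1 u2 h x) + ccNorm x * φ (HT u1 u2 (-h) x)) :=
    j1.add j2
  have j12' : Integrable (fun x => ccNorm (HT u1 u2 (-h) x) * φ x + ccNorm (HT u1 u2 h x) * φ x) :=
    j1'.add j2'
  have e1 : ∫ x, ccNorm x * (φ (HT u1 u2 h x) + φ (HT u1 u2 (-h) x) - 2 * φ x)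
      = ∫ x, (ccNorm (HT u1 u2 (-h) x) * φ x + ccNorm (HT u1 u2 h x) * φ x - 2 * (ccNorm x * φ x)) := by
    rw [integral_sub j12' j3, integral_add j1' j2']
    have e2 := integral_trans φ u1 u2 h
    have e3 := integral_trans φ u1 u2 (-h)
    rw [neg_neg] at e3
    rw [← e2, ← e3, ← integral_add j1 j2, ← integral_sub j12 j3]
    congr 1
    funext x
    ring
  rw [e1, ← integral_const_mul, ← integral_const_mul]
  refine integral_mono_ae (j12'.sub j3) (((integrable_div hφ hc).const_mul _).const_mul _) ?_
  filter_upwards [ae_ne_zero] with x hx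
  have := mul_le_mul_of_nonneg_right (hK x h u1 u2 hx hu) (h0 x)
  rw [← HT_neg] at this
  change (ccNorm (HT u1 u2 h x) + _) * _ ≤ _ at this
  have e : (2 * ccNorm x + K * (h ^ 2 / ccNorm x)) * φ x =
    2 * (ccNorm x * φ x) + h ^ 2 * (K * (φ x / ccNorm x)) := by ring
  rw [e] at this
  change _ + _ - _ ≤ _
  linarith

theorem second_order_le {K : ℝ} (hK : ∀ (x : Heis) (h u1 u2 : ℝ), x ≠ 0 → |u1| + |u2| ≤ 1 →
    ccNorm ((x.1 + h * u1, x.2.1 + h * u2, x.2.2 + h * ((x.1 * u2 - x.2.1 * u1) / 2)) : Heis) +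
    ccNorm ((x.1 - h * u1, x.2.1 - h * u2, x.2.2 - h * ((x.1 * u2 - x.2.1 * u1) / 2)) : Heis)
      ≤ 2 * ccNorm x + K * (h ^ 2 / ccNorm x)) {φ : Heis → ℝ} (hφ : ContDiff ℝ (⊤ : ℕ∞) φ)
    (hc : HasCompactSupport φ) (h0 : ∀ x, 0 ≤ φ x) {u1 u2 : ℝ} (hu : |u1| + |u2| ≤ 1) :
    Integrable (fun x => ccNorm x * HY u1 u2 (HY u1 u2 φ) x) ∧
    ∫ x, ccNorm x * HY u1 u2 (HY u1 u2 φ) x ≤ K * ∫ x, φ x / ccNorm x := by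
  have c1 := HY_contDiff hφ u1 u2
  have c2 := HY_contDiff c1 u1 u2
  have s2 : tsupport (HY u1 u2 (HY u1 u2 φ)) ⊆ tsupport φ :=
    (HY_tsupport _ u1 u2).trans (HY_tsupport _ u1 u2)
  have hc2 : HasCompactSupport (HY u1 u2 (HY u1 u2 φ)) :=
    hc.of_isClosed_subset (isClosed_tsupport _) s2
  refine ⟨integrable_mul c2.continuous hc2, ?_⟩
  set Z := HY u1 u2 (HY u1 u2 φ) with hZ
  obtain ⟨C, hC⟩ := hc2.exists_bound_of_continuous c2.continuous
  have C0 : 0 ≤ C := (norm_nonneg _).trans (hC 0)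
  let S : Set Heis := (fun p : ℝ × Heis => HT u1 u2 p.1 p.2) '' (Set.Icc (-1) 1 ×ˢ tsupport φ)
  have hS : IsCompact S := (isCompact_Icc.prod hc.isCompact).image (HT_continuous u1 u2)
  have mvt : ∀ x (n : ℕ), ∃ c, |c| < 1 / ((n:ℝ) + 1) ∧
      φ (HT u1 u2 (1 / ((n:ℝ) + 1)) x) + φ (HT u1 u2 (-(1 / ((n:ℝ) + 1))) x) - 2 * φ x =
        (1 / ((n:ℝ) + 1)) ^ 2 * Z (HT u1 u2 c x) := by
    intro x n
    have := second_mvt (fun t => comp_hasDerivAt (hφ.differentiable (by simp)) u1 u2 x t)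
      (fun t => comp_hasDerivAt (c1.differentiable (by simp)) u1 u2 x t)
      (h := 1 / ((n:ℝ) + 1)) (by positivity)
    simpa only [HT_zero] using this
  choose c hc1 hc2' using mvt
  have heq : ∀ (n : ℕ) x, ccNorm x * (φ (HT u1 u2 (1 / ((n:ℝ) + 1)) x) +
      φ (HT u1 u2 (-(1 / ((n:ℝ) + 1))) x) - 2 * φ x) / (1 / ((n:ℝ) + 1)) ^ 2
      = ccNorm x * Z (HT u1 u2 (c x n) x) := by
    intro n x
    rw [hc2' x n]
    have : (1 / ((n:ℝ) + 1)) ^ 2 ≠ 0 := by positivity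
    field_simp
  have lim := tendsto_integral_of_dominated_convergence (μ := (volume : Measure Heis))
    (F := fun (n : ℕ) x => ccNorm x * (φ (HT u1 u2 (1 / ((n:ℝ) + 1)) x) +
      φ (HT u1 u2 (-(1 / ((n:ℝ) + 1))) x) - 2 * φ x) / (1 / ((n:ℝ) + 1)) ^ 2)
    (f := fun x => ccNorm x * Z x) (S.indicator fun x => HB x * C) ?_ ?_ ?_ ?_
  · refine le_of_tendsto lim (Eventually.of_forall fun n => ?_)
    rw [integral_div, div_le_iff₀ (by positivity), mul_comm _ ((1 / ((n:ℝ) + 1)) ^ 2)]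
    exact diff_integral_le hK hφ.continuous hc h0 hu _
  · intro n
    have hcont := hφ.continuous
    have k1 : Continuous fun x => φ (HT u1 u2 (1 / ((n:ℝ) + 1)) x) := hcont.comp (HT_cont _ _ _)
    have k2 : Continuous fun x => φ (HT u1 u2 (-(1 / ((n:ℝ) + 1))) x) := hcont.comp (HT_cont _ _ _)
    exact ((ccNorm_measurable.mul ((k1.add k2).sub (continuous_const.mul hcont)).measurable).div_const _).aestronglyMeasurable
  · rw [integrable_indicator_iff hS.measurableSet]
    exact (HB_cont.mul continuous_const).continuousOn.integrableOn_compact hS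
  · intro n
    refine Eventually.of_forall fun x => ?_
    rw [heq n x]
    have hcle : |c x n| ≤ 1 := by
      refine (hc1 x n).le.trans ?_
      rw [div_le_one (by positivity)]
      linarith [Nat.cast_nonneg (α := ℝ) n]
    by_cases hx : x ∈ S
    · rw [Set.indicator_of_mem hx, norm_mul, Real.norm_of_nonneg (ccNorm_nonneg x)]
      exact mul_le_mul (ccNorm_le x) (hC _) (norm_nonneg _) (HB_nonneg x)
    · rw [Set.indicator_of_notMem hx]
      have : Z (HT u1 u2 (c x n) x) = 0 := by
        by_contra hne
        apply hx
        refine ⟨(-(c x n), HT u1 u2 (c x n) x), ⟨?_, s2 (subset_tsupport _ hne)⟩, ?_⟩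
        · have := abs_le.1 hcle
          simp only [Set.mem_Icc]
          constructor <;> linarith
        · simp only [HT_HT, neg_add_cancel, HT_zero]
      rw [this, mul_zero, norm_zero]
  · refine Eventually.of_forall fun x => ?_
    simp only [heq]
    have t0 : Tendsto (fun n => c x n) atTop (nhds 0) :=
      squeeze_zero_norm (fun n => (hc1 x n).le) tendsto_one_div_add_atTop_nhds_zero_nat
    have hcomp : Continuous fun t : ℝ => Z (HT u1 u2 t x) :=
      c2.continuous.comp ((HT_continuous u1 u2).comp (by fun_prop : Continuous fun t : ℝ => (t, x)))
    have := (hcomp.tendsto 0).comp t0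
    rw [HT_zero] at this
    exact this.const_mul _

/-- There is a constant `K > 0` such that `Δd ≤ K/d` in the sense of distributions:
for every nonnegative smooth compactly supported `φ : ℝ³ → ℝ`,
`∫ d(x) Δφ(x) dx ≤ K ∫ φ(x)/d(x) dx`. -/
theorem heisenberg_subLaplacian_dist_bound :
    ∃ K : ℝ, 0 < K ∧ ∀ φ : Heis → ℝ, ContDiff ℝ (⊤ : ℕ∞) φ → HasCompactSupport φ →
      (∀ x, 0 ≤ φ x) →
      ∫ x : Heis, ccNorm x * subLap φ x ≤ K * ∫ x : Heis, φ x / ccNorm x := by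
  obtain ⟨K, hK0, hK⟩ := second_diff
  refine ⟨2 * K, by positivity, fun φ hφ hc h0 => ?_⟩
  obtain ⟨i1, l1⟩ := second_order_le hK hφ hc h0 (u1 := 1) (u2 := 0) (by norm_num)
  obtain ⟨i2, l2⟩ := second_order_le hK hφ hc h0 (u1 := 0) (u2 := 1) (by norm_num)
  have e : (fun x => ccNorm x * subLap φ x) =
      fun x => ccNorm x * HY 1 0 (HY 1 0 φ) x + ccNorm x * HY 0 1 (HY 0 1 φ) x := by
    funext x
    simp only [subLap, X1_eq, X2_eq]
    ring
  rw [e, integral_add i1 i2]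
  linarith
end
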